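/- Let φ : ℙ¹ → ℙ¹ be a rational map of degree d ≥ 2 defined over a number field K, with good reduction outside a finite set of places S of K containing all archimedean ones. If there exist at least four K-rational periodic points of φ, then |Tail(φ,K)| + |Per₀(φ,K)| ≤ 12·7^{4|S|}, where Tail(φ,K) is the set of K-rational tail points of φ and Per₀(φ,K) is the set of K-rational periodic points belonging to some critical cycle of φ. -/

import Mathlib

open NumberField IsDedekindDomain MvPolynomial
open scoped Classical nonZeroDivisors

set_option synthInstance.maxHeartbeats 1000000
set_option maxHeartbeats 1000000

noncomputable section

/-- The projective line over `K`. -/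
abbrev P1 (K : Type*) [Field K] := Projectivization K (Fin 2 → K)

variable {K : Type*} [Field K] [NumberField K]

/-- The additive `v`-adic valuation (order) of `x ∈ K`, with junk value `0` at `x = 0`,
normalized so that it is surjective onto `ℤ`. -/
def ordAt (v : HeightOneSpectrum (𝓞 K)) (x : K) : ℤ :=
  if hx : x = 0 then 0
  else - Multiplicative.toAdd (WithZero.unzero ((v.valuation K).ne_zero_iff.mpr hx))

/-- `min (v(x), v(y))` for a pair of coordinates, not both zero. -/
def minOrd (v : HeightOneSpectrum (𝓞 K)) (x y : K) : ℤ :=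
  if x = 0 then ordAt v y else if y = 0 then ordAt v x else min (ordAt v x) (ordAt v y)

/-- The `v`-adic logarithmic distance between two points of `ℙ¹(K)`:
`δ_v(P,Q) = v(x₁y₂ - x₂y₁) - min(v x₁, v y₁) - min(v x₂, v y₂)`, with value `⊤` when `P = Q`
(it is independent of the choice of homogeneous coordinates, so we compute it on the chosen
representatives). -/
def logDist (v : HeightOneSpectrum (𝓞 K)) (P Q : P1 K) : WithTop ℤ :=
  if P = Q then ⊤
  else ((ordAt v (P.rep 0 * Q.rep 1 - P.rep 1 * Q.rep 0)
        - minOrd v (P.rep 0) (P.rep 1) - minOrd v (Q.rep 0) (Q.rep 1) : ℤ) : WithTop ℤ)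

/-- An endomorphism of `ℙ¹` of degree `d` defined over `K`, given by a pair of homogeneous
forms of degree `d` with no common zero over the algebraic closure, together with the induced
self-map of `ℙ¹(K)`. -/
structure P1Map (K : Type*) [Field K] (d : ℕ) where
  toFun : P1 K → P1 K
  F : MvPolynomial (Fin 2) K
  G : MvPolynomial (Fin 2) K
  homF : F.IsHomogeneous d
  homG : G.IsHomogeneous d
  coprime : ∀ x y : AlgebraicClosure K,
    aeval ![x, y] F = 0 → aeval ![x, y] G = 0 → x = 0 ∧ y = 0
  compat : ∀ (x y : K) (hxy : ![x, y] ≠ 0)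
    (h : ![eval ![x, y] F, eval ![x, y] G] ≠ 0),
    toFun (Projectivization.mk K ![x, y] hxy) =
      Projectivization.mk K ![eval ![x, y] F, eval ![x, y] G] h

variable {d : ℕ}

/-- `φ` has good reduction at the finite place `v`: some representing pair of forms has
coefficients in the valuation ring at `v`, not all in the maximal ideal, and the reductions
of the two forms modulo `v` have no common zero in `ℙ¹` of the algebraic closure of the
residue field. -/
def GoodReductionAt (φ : P1Map K d) (v : HeightOneSpectrum (𝓞 K)) : Prop :=
  ∃ c : K, c ≠ 0 ∧
    ∃ F₀ G₀ : MvPolynomial (Fin 2) (v.valuation (K := K)).valuationSubring,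
      MvPolynomial.map ((v.valuation (K := K)).valuationSubring.subtype) F₀ = C c * φ.F ∧
      MvPolynomial.map ((v.valuation (K := K)).valuationSubring.subtype) G₀ = C c * φ.G ∧
      ((∃ m, F₀.coeff m ∉ IsLocalRing.maximalIdeal (v.valuation (K := K)).valuationSubring) ∨
        (∃ m, G₀.coeff m ∉ IsLocalRing.maximalIdeal (v.valuation (K := K)).valuationSubring)) ∧
      ∀ x y : AlgebraicClosure
          (IsLocalRing.ResidueField (v.valuation (K := K)).valuationSubring),
        eval ![x, y] (MvPolynomial.map
          ((algebraMap (IsLocalRing.ResidueField (v.valuation (K := K)).valuationSubring)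
              (AlgebraicClosure _)).comp
            (IsLocalRing.residue _)) F₀) = 0 →
        eval ![x, y] (MvPolynomial.map
          ((algebraMap (IsLocalRing.ResidueField (v.valuation (K := K)).valuationSubring)
              (AlgebraicClosure _)).comp
            (IsLocalRing.residue _)) G₀) = 0 →
        x = 0 ∧ y = 0

/-- `φ` has good reduction outside `S`, where `S` consists of all archimedean places together
with the finite places in `T`. -/
def GoodReductionOutside (φ : P1Map K d) (T : Finset (HeightOneSpectrum (𝓞 K))) : Prop :=
  ∀ v ∉ T, GoodReductionAt φ v

/-- `P` is a periodic point of `φ`. -/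
def IsPeriodicPoint (φ : P1Map K d) (P : P1 K) : Prop :=
  ∃ n, 0 < n ∧ φ.toFun^[n] P = P

/-- `P` is a preperiodic point of `φ`. -/
def IsPreperiodicPoint (φ : P1Map K d) (P : P1 K) : Prop :=
  ∃ m, IsPeriodicPoint φ (φ.toFun^[m] P)

/-- `P` is a tail point of `φ`: preperiodic but not periodic. -/
def IsTailPoint (φ : P1Map K d) (P : P1 K) : Prop :=
  IsPreperiodicPoint φ P ∧ ¬ IsPeriodicPoint φ P

/-- The set `Tail(φ,K,P)` of `K`-rational tail points of `P`: non-periodic points having `P`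
in their forward orbit. -/
def TailOf (φ : P1Map K d) (P : P1 K) : Set (P1 K) :=
  {Q | ¬ IsPeriodicPoint φ Q ∧ ∃ n, φ.toFun^[n] Q = P}

/-- `P = [a:b]` is a critical point of `φ = [F:G]`: the algebraic condition
`φ([x:y]) = φ([a:b])`, i.e. the form `G(a,b)·F(X,Y) - F(a,b)·G(X,Y)`, vanishes to order
at least `2` at `[a:b]`. -/
def IsCriticalPt (φ : P1Map K d) (P : P1 K) : Prop :=
  ∃ (a b : K) (hab : ![a, b] ≠ 0), P = Projectivization.mk K ![a, b] hab ∧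
    (C b * X 0 - C a * X 1) ^ 2 ∣
      (C (eval ![a, b] φ.G) * φ.F - C (eval ![a, b] φ.F) * φ.G)

/-- `P` belongs to a critical cycle of `φ`: it lies in the orbit of a critical periodic
point. -/
def InCriticalCycle (φ : P1Map K d) (P : P1 K) : Prop :=
  ∃ Q, IsCriticalPt φ Q ∧ IsPeriodicPoint φ Q ∧ ∃ n, φ.toFun^[n] Q = P

/-- The cardinality `|S|` of the set of places `S` consisting of all archimedean places
together with the finite places in `T`. -/
def sCard (K : Type*) [Field K] [NumberField K] (T : Finset (HeightOneSpectrum (𝓞 K))) : ℕ :=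
  T.card + Fintype.card (InfinitePlace K)

/-- `B(s) = 2^{16 s}`. -/
def Bconst (s : ℕ) : ℕ := 2 ^ (16 * s)

/-- `C(n,s) = e^{(6n)^{3n} (n s + 1 - n)}`. -/
def Cconst (n s : ℕ) : ℝ := Real.exp ((6 * n : ℝ) ^ (3 * n) * (n * s + 1 - n))

/-- `CV(d,s) = (3B(s)+13)d + 27B(s) + C(5,s) + 6C(3,s) + 32`. -/
def CVconst (d s : ℕ) : ℝ :=
  (3 * (Bconst s : ℝ) + 13) * d + 27 * (Bconst s : ℝ) + Cconst 5 s + 6 * Cconst 3 s + 32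

/-- `L₁(d,s) = (d-1)(1 + d(1 + B(s)))`. -/
def L1const (d s : ℕ) : ℕ := (d - 1) * (1 + d * (1 + Bconst s))

/-- `L₂(d,s) = max{(2(C(3,s)+2)+1)d + 1, (d-1)(1 + B(s)(B(s) + C(3,s) + 3))}`. -/
def L2const (d s : ℕ) : ℝ :=
  max ((2 * (Cconst 3 s + 2) + 1) * d + 1)
    (((d : ℝ) - 1) * (1 + (Bconst s : ℝ) * ((Bconst s : ℝ) + Cconst 3 s + 3)))

/-- `L₃(d,s) = ((1 + 3B(s))B(s) + 1)(d-1)`. -/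
def L3const (d s : ℕ) : ℕ := ((1 + 3 * Bconst s) * Bconst s + 1) * (d - 1)

/-- `L₄(d,s) = (C(3,s) + 3)(d-1)`. -/
def L4const (d s : ℕ) : ℝ := (Cconst 3 s + 3) * ((d : ℝ) - 1)

end

/-!
Let `Q` be a tail point or a point of a critical cycle. Some iterate of `φ` fixes the given periodic
points and maps `Q` to a fixed point `R`. At a place of good reduction every fixed point `P ≠ R` has
a reduction different from that of `Q`. Otherwise `P`, `Q` and `R` reduce to the same point, and in
a chart at `P` the polynomial expressing that a point is mapped to `R` vanishes at both `Q` and `R`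
(doubly if `Q = R` lies on a critical cycle); this makes its value at `P` smaller than the distance
from `P` to `R`, although `P` is fixed. So outside `S` the point `Q` stays distinct from three of
the four periodic points, and the cross-ratio `x` of `Q` with these three is such that the
valuations of `x` and `1 - x` outside `S` do not depend on `Q`.

To bound the number of such `x`, attach to `x` the vector of logarithmic sizes of `x` and `1 - x` at
the places of `S`. These vectors span a space of dimension less than `2 |S|`, on which the height is
an asymmetric norm, so the space is covered by a number of small balls, or of narrow cones,
exponential in its dimension. A Vandermonde determinant bounds the number of `x` of small height in
a small ball. In a narrow cone the larger heights grow geometrically, since two solutions repel each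
other, and Hermite–Padé approximation to powers of `X` and `1 - X` bounds their ratio.
-/

/-! ### Logarithmic vectors and their heights -/

/-- The space of logarithmic vectors of a finite set `ι` of places: an element records at each
place the logarithmic sizes of the two summands of a solution of the unit equation. -/
abbrev LogSpace (ι : Type*) := ι → ℝ × ℝ

namespace LogSpace

/-- The contribution `max (a, b, 0)` of a single place to the height of a logarithmic vector. -/
noncomputable def localHeight (p : ℝ × ℝ) : ℝ := max (max p.1 p.2) 0

lemma localHeight_nonneg (p : ℝ × ℝ) : 0 ≤ localHeight p := le_max_right _ _

lemma fst_le_localHeight (p : ℝ × ℝ) : p.1 ≤ localHeight p :=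
  le_max_of_le_left (le_max_left _ _)

lemma snd_le_localHeight (p : ℝ × ℝ) : p.2 ≤ localHeight p :=
  le_max_of_le_left (le_max_right _ _)

lemma localHeight_le {p : ℝ × ℝ} {b : ℝ} (h₁ : p.1 ≤ b) (h₂ : p.2 ≤ b) (h₀ : 0 ≤ b) :
    localHeight p ≤ b :=
  max_le (max_le h₁ h₂) h₀

lemma localHeight_eq_fst_or_snd_or_zero (p : ℝ × ℝ) :
    localHeight p = p.1 ∨ localHeight p = p.2 ∨ localHeight p = 0 := by
  grind [localHeight]

lemma localHeight_add_le (p q : ℝ × ℝ) : localHeight (p + q) ≤ localHeight p + localHeight q :=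
  localHeight_le (add_le_add (fst_le_localHeight p) (fst_le_localHeight q))
    (add_le_add (snd_le_localHeight p) (snd_le_localHeight q))
    (add_nonneg (localHeight_nonneg p) (localHeight_nonneg q))

lemma localHeight_smul {c : ℝ} (hc : 0 ≤ c) (p : ℝ × ℝ) :
    localHeight (c • p) = c * localHeight p := by
  simp [localHeight, mul_max_of_nonneg _ _ hc]

lemma localHeight_neg_le (p : ℝ × ℝ) : localHeight (-p) ≤ 2 * localHeight p - p.1 - p.2 := by
  have h₀ := localHeight_nonneg p
  have h₁ := fst_le_localHeight p
  have h₂ := snd_le_localHeight p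
  apply localHeight_le
  · rw [Prod.fst_neg]
    linarith
  · rw [Prod.snd_neg]
    linarith
  · linarith

variable {ι : Type*} [Fintype ι]

/-- The height of a logarithmic vector. On the logarithmic vector of a solution `x` of the unit
equation it is the logarithmic height of the projective point `[x : 1 - x : 1]`. -/
noncomputable def height (ξ : LogSpace ι) : ℝ := ∑ v, localHeight (ξ v)

lemma height_nonneg (ξ : LogSpace ι) : 0 ≤ height ξ :=
  Finset.sum_nonneg fun _ _ => localHeight_nonneg _

lemma height_zero : height (0 : LogSpace ι) = 0 := by
  simp [height, localHeight]

lemma height_add_le (ξ η : LogSpace ι) : height (ξ + η) ≤ height ξ + height η := by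
  unfold height
  rw [← Finset.sum_add_distrib]
  exact Finset.sum_le_sum fun v _ => localHeight_add_le _ _

lemma height_smul {c : ℝ} (hc : 0 ≤ c) (ξ : LogSpace ι) : height (c • ξ) = c * height ξ := by
  unfold height
  rw [Finset.mul_sum]
  exact Finset.sum_congr rfl fun v _ => localHeight_smul hc _

variable (ι) in
/-- The logarithmic vectors satisfying the product formula in both coordinates. -/
def sumZero : Submodule ℝ (LogSpace ι) :=
  LinearMap.ker (∑ v, LinearMap.proj v : LogSpace ι →ₗ[ℝ] ℝ × ℝ)

lemma mem_sumZero {ξ : LogSpace ι} : ξ ∈ sumZero ι ↔ ∑ v, ξ v = 0 := by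
  simp [sumZero]

lemma sum_fst_eq_zero {ξ : LogSpace ι} (hξ : ξ ∈ sumZero ι) : ∑ v, (ξ v).1 = 0 := by
  simpa [Prod.fst_sum] using congrArg Prod.fst (mem_sumZero.1 hξ)

lemma sum_snd_eq_zero {ξ : LogSpace ι} (hξ : ξ ∈ sumZero ι) : ∑ v, (ξ v).2 = 0 := by
  simpa [Prod.snd_sum] using congrArg Prod.snd (mem_sumZero.1 hξ)

lemma height_neg_le {ξ : LogSpace ι} (hξ : ξ ∈ sumZero ι) : height (-ξ) ≤ 2 * height ξ := by
  calc height (-ξ) ≤ ∑ v, (2 * localHeight (ξ v) - (ξ v).1 - (ξ v).2) :=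
        Finset.sum_le_sum fun v _ => localHeight_neg_le _
    _ = 2 * height ξ := by
        simp only [Finset.sum_sub_distrib, ← Finset.mul_sum, sum_fst_eq_zero hξ,
          sum_snd_eq_zero hξ, height, sub_zero]

end LogSpace

open LogSpace

/-! ### Systems of places -/

/-- A finite system of weighted absolute values on `K`, each nonarchimedean or induced by a
complex embedding, together with a subring of elements that are integral outside the system and
hence satisfy the product inequality. The archimedean weight `archWeight v` is `weight v` at an
archimedean place and `0` at a nonarchimedean one, so that the error terms of both kinds of places
are multiples of it. -/
structure PlaceSystem (K : Type*) [Field K] (ι : Type*) [Fintype ι] where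
  abv : ι → AbsoluteValue K ℝ
  weight : ι → ℝ
  archWeight : ι → ℝ
  weight_pos : ∀ v, 0 < weight v
  nonarch_or_arch : ∀ v, (archWeight v = 0 ∧ IsNonarchimedean (abv v)) ∨
    (archWeight v = weight v ∧ ∃ σ : K →+* ℂ, ∀ x, abv v x = ‖σ x‖)
  integers : Subring K
  sum_log_nonneg : ∀ x ∈ integers, x ≠ 0 → 0 ≤ ∑ v, weight v * Real.log (abv v x)

namespace PlaceSystem

variable {K : Type*} [Field K] {ι : Type*} [Fintype ι]

section Basic

variable (S : PlaceSystem K ι)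

lemma archWeight_nonneg (v : ι) : 0 ≤ S.archWeight v := by
  rcases S.nonarch_or_arch v with ⟨h, -⟩ | ⟨h, -⟩
  · exact h.ge
  · exact h ▸ (S.weight_pos v).le

/-- The sum of the archimedean weights, which is `1` for the normalized places of a number
field. -/
noncomputable def totalArchWeight : ℝ := ∑ v, S.archWeight v

/-- The weighted logarithm of the absolute value at the place `v` (with value `0` at `0`). -/
noncomputable def logAbv (v : ι) (x : K) : ℝ := S.weight v * Real.log (S.abv v x)

/-- `LogLE v x b` says that the weighted logarithm of `x` at `v` is at most `b`; it is phrased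
through the exponential so that it also holds at `x = 0`. -/
def LogLE (v : ι) (x : K) (b : ℝ) : Prop := S.abv v x ≤ Real.exp (b / S.weight v)

end Basic

variable {S : PlaceSystem K ι} {v : ι} {x y : K} {a b : ℝ}

namespace LogLE

lemma mono (h : S.LogLE v x a) (hab : a ≤ b) : S.LogLE v x b := by
  have := S.weight_pos v
  exact h.trans (Real.exp_le_exp.2 (by gcongr))

lemma one : S.LogLE v 1 0 := by simp [LogLE]

lemma neg (hx : S.LogLE v x b) : S.LogLE v (-x) b := by
  rwa [LogLE, (S.abv v).map_neg]

lemma mul (hx : S.LogLE v x a) (hy : S.LogLE v y b) : S.LogLE v (x * y) (a + b) := by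
  rw [LogLE, map_mul, add_div, Real.exp_add]
  exact mul_le_mul hx hy ((S.abv v).nonneg _) (Real.exp_pos _).le

lemma prod {α : Type*} (s : Finset α) {x : α → K} {a : α → ℝ}
    (hx : ∀ i ∈ s, S.LogLE v (x i) (a i)) : S.LogLE v (∏ i ∈ s, x i) (∑ i ∈ s, a i) := by
  induction s using Finset.induction_on with
  | empty => simpa using one
  | insert i s hi ih =>
    rw [Finset.prod_insert hi, Finset.sum_insert hi]
    exact (hx i (Finset.mem_insert_self _ _)).mul
      (ih fun j hj => hx j (Finset.mem_insert_of_mem hj))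

lemma pow (hx : S.LogLE v x a) (k : ℕ) : S.LogLE v (x ^ k) (k * a) := by
  simpa using prod (Finset.range k) fun _ _ => hx

lemma of_logAbv_le (hx : x ≠ 0) (h : S.logAbv v x ≤ b) : S.LogLE v x b := by
  rw [LogLE, ← Real.log_le_iff_le_exp ((S.abv v).pos hx), le_div_iff₀' (S.weight_pos v)]
  exact h

lemma logAbv_le (h : S.LogLE v x b) (hx : x ≠ 0) : S.logAbv v x ≤ b := by
  rwa [LogLE, ← Real.log_le_iff_le_exp ((S.abv v).pos hx), le_div_iff₀' (S.weight_pos v)] at h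

lemma sum_of_isNonarchimedean (hv : IsNonarchimedean (S.abv v)) {α : Type*} (s : Finset α)
    (c : α → ℤ) {t : α → K} (ht : ∀ i ∈ s, S.LogLE v (t i) b) :
    S.LogLE v (∑ i ∈ s, (c i : K) * t i) b := by
  rcases s.eq_empty_or_nonempty with rfl | hs
  · simp [LogLE, (Real.exp_pos _).le]
  · obtain ⟨i, hi, hle⟩ := hv.finset_image_add_of_nonempty (fun i => (c i : K) * t i) hs
    calc S.abv v (∑ i ∈ s, (c i : K) * t i) ≤ S.abv v (c i) * S.abv v (t i) := by
          simpa only [map_mul] using hle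
      _ ≤ S.abv v (t i) := mul_le_of_le_one_left ((S.abv v).nonneg _)
          (IsNonarchimedean.apply_intCast_le_one hv)
      _ ≤ _ := ht i hi

lemma sum {α : Type*} (s : Finset α) (c : α → ℤ) (t : α → K) {C : ℝ}
    (hC : 1 ≤ C) (hc : ∑ i ∈ s, |(c i : ℝ)| ≤ C) (ht : ∀ i ∈ s, S.LogLE v (t i) b) :
    S.LogLE v (∑ i ∈ s, (c i : K) * t i) (b + S.archWeight v * Real.log C) := by
  rcases S.nonarch_or_arch v with ⟨hw, hna⟩ | ⟨hw, σ, hσ⟩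
  · simpa [hw] using sum_of_isNonarchimedean hna s c ht
  · rw [LogLE, hw, add_div, mul_div_cancel_left₀ _ (S.weight_pos v).ne', Real.exp_add,
      Real.exp_log (by linarith)]
    calc S.abv v (∑ i ∈ s, (c i : K) * t i) ≤ ∑ i ∈ s, S.abv v ((c i : K) * t i) :=
          (S.abv v).sum_le _ _
      _ ≤ ∑ i ∈ s, |(c i : ℝ)| * Real.exp (b / S.weight v) := by
          refine Finset.sum_le_sum fun i hi => ?_
          rw [map_mul, hσ (c i : K), map_intCast, Complex.norm_intCast]
          exact mul_le_mul_of_nonneg_left (ht i hi) (abs_nonneg _)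
      _ = Real.exp (b / S.weight v) * ∑ i ∈ s, |(c i : ℝ)| := by
          rw [← Finset.sum_mul, mul_comm]
      _ ≤ _ := mul_le_mul_of_nonneg_left hc (Real.exp_pos _).le

lemma sub (hx : S.LogLE v x b) (hy : S.LogLE v y b) :
    S.LogLE v (x - y) (b + S.archWeight v * Real.log 2) := by
  have h := sum (S := S) (v := v) (b := b) Finset.univ ![1, -1] ![x, y] one_le_two
    (by norm_num [Fin.sum_univ_two]) (by simp [Fin.forall_fin_two, hx, hy])
  simpa [Fin.sum_univ_two, sub_eq_add_neg] using h

end LogLE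

lemma logAbv_mul (hx : x ≠ 0) (hy : y ≠ 0) :
    S.logAbv v (x * y) = S.logAbv v x + S.logAbv v y := by
  simp only [logAbv, map_mul, Real.log_mul ((S.abv v).ne_zero hx) ((S.abv v).ne_zero hy), mul_add]

lemma logAbv_inv : S.logAbv v x⁻¹ = -S.logAbv v x := by
  simp [logAbv]

lemma logAbv_pow (n : ℕ) : S.logAbv v (x ^ n) = n * S.logAbv v x := by
  simp only [logAbv, map_pow, Real.log_pow]
  ring

lemma sum_logAbv_nonneg (hx : x ∈ S.integers) (h0 : x ≠ 0) : 0 ≤ ∑ v, S.logAbv v x :=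
  S.sum_log_nonneg x hx h0

lemma sum_logAbv_eq_zero (hx : x ∈ S.integers) (hx' : x⁻¹ ∈ S.integers) (h0 : x ≠ 0) :
    ∑ v, S.logAbv v x = 0 := by
  have h₁ := sum_logAbv_nonneg hx h0
  have h₂ := sum_logAbv_nonneg hx' (inv_ne_zero h0)
  simp only [logAbv_inv, Finset.sum_neg_distrib] at h₂
  linarith

variable (S) in
/-- The logarithmic vector of the solution `x + (1 - x) = 1` of the unit equation. -/
noncomputable def logVec (x : K) : LogSpace ι := fun v => (S.logAbv v x, S.logAbv v (1 - x))

variable (S) in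
/-- `x` solves the unit equation: both `x` and `1 - x` are units of the ring of integers. -/
structure IsSolution (x : K) : Prop where
  ne_zero : x ≠ 0
  one_sub_ne_zero : 1 - x ≠ 0
  mem : x ∈ S.integers
  inv_mem : x⁻¹ ∈ S.integers
  one_sub_inv_mem : (1 - x)⁻¹ ∈ S.integers

lemma IsSolution.one_sub_mem (h : S.IsSolution x) : 1 - x ∈ S.integers :=
  S.integers.sub_mem S.integers.one_mem h.mem

lemma IsSolution.logVec_mem_sumZero (h : S.IsSolution x) : S.logVec x ∈ sumZero ι := by
  rw [mem_sumZero]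
  ext
  · simpa [logVec, Prod.fst_sum] using sum_logAbv_eq_zero h.mem h.inv_mem h.ne_zero
  · simpa [logVec, Prod.snd_sum] using
      sum_logAbv_eq_zero h.one_sub_mem h.one_sub_inv_mem h.one_sub_ne_zero

end PlaceSystem

/-! ### Solutions are not small, and repel each other -/

section TinyDisc

lemma quadForm_mul_prod_le_of_le {A B C m : ℝ} (hA : 0 ≤ A) (hAB : A ≤ B) (hBC : B ≤ C)
    (hC : C ≤ m) :
    27 * (A * B * C) * (A ^ 2 + B ^ 2 + C ^ 2 - A * B - B * C - C * A) ≤ 4 * m ^ 5 := by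
  have hquad : A ^ 2 + B ^ 2 + C ^ 2 - A * B - B * C - C * A ≤ (C - A) ^ 2 := by
    nlinarith [mul_nonneg (sub_nonneg.2 hAB) (sub_nonneg.2 hBC)]
  have hcubic : 27 * (A * (C - A) ^ 2) ≤ 4 * C ^ 3 := by
    linarith [show 4 * C ^ 3 - 27 * (A * (C - A) ^ 2) = (C - 3 * A) ^ 2 * (4 * C - 3 * A) by ring,
      mul_nonneg (sq_nonneg (C - 3 * A)) (by linarith : 0 ≤ 4 * C - 3 * A)]
  have hB : 0 ≤ B := hA.trans hAB
  have hC0 : 0 ≤ C := hB.trans hBC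
  calc 27 * (A * B * C) * (A ^ 2 + B ^ 2 + C ^ 2 - A * B - B * C - C * A)
      ≤ 27 * (A * B * C) * (C - A) ^ 2 := mul_le_mul_of_nonneg_left hquad (by positivity)
    _ = B * C * (27 * (A * (C - A) ^ 2)) := by ring
    _ ≤ C * C * (4 * C ^ 3) := by gcongr
    _ = 4 * C ^ 5 := by ring
    _ ≤ 4 * m ^ 5 := by gcongr

lemma quadForm_mul_prod_le {A B C m : ℝ} (hA : 0 ≤ A) (hB : 0 ≤ B) (hC : 0 ≤ C)
    (hAm : A ≤ m) (hBm : B ≤ m) (hCm : C ≤ m) :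
    27 * (A * B * C) * (A ^ 2 + B ^ 2 + C ^ 2 - A * B - B * C - C * A) ≤ 4 * m ^ 5 := by
  wlog hAB : A ≤ B generalizing A B
  · linarith [this hB hA hBm hAm (le_of_not_ge hAB)]
  rcases le_total C A with hCA | hAC
  · linarith [quadForm_mul_prod_le_of_le hC hCA hAB hBm]
  rcases le_total C B with hCB | hBC
  · linarith [quadForm_mul_prod_le_of_le hA hAC hCB hBm]
  · exact quadForm_mul_prod_le_of_le hA hAB hBC hCm

lemma norm_sq_sub_add_one_sq (z : ℂ) :
    ‖z ^ 2 - z + 1‖ ^ 2 = (‖z‖ ^ 2) ^ 2 + (‖1 - z‖ ^ 2) ^ 2 + 1 ^ 2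
      - ‖z‖ ^ 2 * ‖1 - z‖ ^ 2 - ‖1 - z‖ ^ 2 * 1 - 1 * ‖z‖ ^ 2 := by
  simp only [Complex.sq_norm, Complex.normSq_apply, sq (_ : ℂ), Complex.add_re, Complex.sub_re,
    Complex.mul_re, Complex.one_re, Complex.add_im, Complex.sub_im, Complex.mul_im, Complex.one_im]
  ring

lemma sq_norm_mul_sq_sub_add_one_le {z : ℂ} {m : ℝ} (hz : ‖z‖ ≤ m) (hz' : ‖1 - z‖ ≤ m)
    (hm : 1 ≤ m) : 27 / 4 * (‖z‖ * ‖1 - z‖ * ‖z ^ 2 - z + 1‖) ^ 2 ≤ m ^ 10 := by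
  have h := quadForm_mul_prod_le (sq_nonneg ‖z‖) (sq_nonneg ‖1 - z‖) zero_le_one
    (pow_le_pow_left₀ (norm_nonneg _) hz 2) (pow_le_pow_left₀ (norm_nonneg _) hz' 2)
    (one_le_pow₀ hm)
  rw [← norm_sq_sub_add_one_sq] at h
  linarith

end TinyDisc

namespace PlaceSystem

variable {K : Type*} [Field K] {ι : Type*} [Fintype ι] {S : PlaceSystem K ι}

lemma log_add_logAbv_le {x : K} (hx : x ≠ 0) (hy : 1 - x ≠ 0) (he : x ^ 2 - x + 1 ≠ 0) (v : ι) :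
    S.archWeight v * Real.log (27 / 4)
      + 2 * (S.logAbv v x + S.logAbv v (1 - x) + S.logAbv v (x ^ 2 - x + 1)) ≤
      10 * localHeight (S.logVec x v) := by
  set M := localHeight (S.logVec x v)
  have hM : 0 ≤ M := localHeight_nonneg _
  have hxM : S.logAbv v x ≤ M := fst_le_localHeight (S.logVec x v)
  have hyM : S.logAbv v (1 - x) ≤ M := snd_le_localHeight (S.logVec x v)
  rcases S.nonarch_or_arch v with ⟨hw, hna⟩ | ⟨hw, σ, hσ⟩
  · have hx2 : S.LogLE v (x ^ 2) (2 * M) := (LogLE.of_logAbv_le hx hxM).pow 2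
    have hx1 : S.LogLE v x (2 * M) := .of_logAbv_le hx (by linarith)
    have h1 : S.LogLE v (1 : K) (2 * M) := LogLE.one.mono (by linarith)
    have h := LogLE.sum_of_isNonarchimedean hna Finset.univ ![1, -1, 1] (t := ![x ^ 2, x, 1])
      (b := 2 * M) (by simp [Fin.forall_fin_succ, hx2, hx1, h1])
    have heM : S.logAbv v (x ^ 2 - x + 1) ≤ 2 * M :=
      LogLE.logAbv_le (by simpa [Fin.sum_univ_three, sub_eq_add_neg] using h) he
    rw [hw]
    linarith
  · set m := Real.exp (M / S.weight v)
    have hlogm : S.weight v * Real.log m = M := by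
      rw [Real.log_exp, mul_div_cancel₀ _ (S.weight_pos v).ne']
    have hbound : ∀ z : K, z ≠ 0 → S.logAbv v z ≤ M → ‖σ z‖ ≤ m := fun z hz hzM => by
      rw [← hσ]
      exact LogLE.of_logAbv_le hz hzM
    have hpos : ∀ z : K, z ≠ 0 → ‖σ z‖ ≠ 0 := fun z hz => by simpa using hz
    have key := sq_norm_mul_sq_sub_add_one_le (by simpa using hbound x hx hxM)
      (by simpa using hbound (1 - x) hy hyM) (Real.one_le_exp (div_nonneg hM (S.weight_pos v).le))
    have hx' := hpos x hx
    have hy' := hpos _ hy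
    have he' := hpos _ he
    simp only [map_add, map_sub, map_pow, map_one] at hy' he'
    have hlog := Real.log_le_log (by positivity) key
    rw [Real.log_mul (by norm_num) (by positivity), Real.log_pow, Real.log_pow,
      Real.log_mul (by positivity) he', Real.log_mul hx' hy'] at hlog
    have := mul_le_mul_of_nonneg_left hlog (S.weight_pos v).le
    simp only [logAbv, hσ, hw, map_add, map_sub, map_pow, map_one]
    push_cast at this
    linarith

-- A solution with small height would have `x ^ 2 - x + 1`, an integer, small at all places.
lemma totalArchWeight_mul_log_le_height {x : K} (h : S.IsSolution x) (he : x ^ 2 - x + 1 ≠ 0) :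
    S.totalArchWeight * Real.log (27 / 4) ≤ 10 * height (S.logVec x) := by
  have heO : x ^ 2 - x + 1 ∈ S.integers :=
    S.integers.add_mem (S.integers.sub_mem (S.integers.pow_mem h.mem 2) h.mem) S.integers.one_mem
  have hsum := Finset.sum_le_sum fun v (_ : v ∈ Finset.univ) =>
    log_add_logAbv_le (S := S) h.ne_zero h.one_sub_ne_zero he v
  rw [Finset.sum_add_distrib, ← Finset.sum_mul, ← Finset.mul_sum, ← Finset.mul_sum,
    Finset.sum_add_distrib, Finset.sum_add_distrib, sum_logAbv_eq_zero h.mem h.inv_mem h.ne_zero,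
    sum_logAbv_eq_zero h.one_sub_mem h.one_sub_inv_mem h.one_sub_ne_zero] at hsum
  unfold height totalArchWeight
  linarith [sum_logAbv_nonneg heO he]

lemma LogLE.det {n : Type*} [Fintype n] [DecidableEq n] {v : ι} {A : Matrix n n K}
    {r c : n → ℝ} (hA : ∀ i j, S.LogLE v (A i j) (r i + c j)) :
    S.LogLE v A.det
      (∑ i, r i + ∑ j, c j + S.archWeight v * Real.log (Fintype.card n).factorial) := by
  rw [Matrix.det_apply']
  refine LogLE.sum _ (fun σ => ((Equiv.Perm.sign σ : ℤˣ) : ℤ)) _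
    (by exact_mod_cast Nat.factorial_pos _) ?_ fun σ _ => ?_
  · have habs (σ : Equiv.Perm n) : |(((Equiv.Perm.sign σ : ℤˣ) : ℤ) : ℝ)| = 1 := by
      rcases Int.units_eq_one_or (Equiv.Perm.sign σ) with h | h <;> simp [h]
    simp [habs, Fintype.card_perm]
  · rw [← Equiv.sum_comp σ r, ← Finset.sum_add_distrib]
    exact LogLE.prod _ fun i _ => hA (σ i) i

lemma LogLE.prod_projVandermonde {m : ℕ} {v : ι} {u w : Fin m → K}
    {α β : ℝ} {M : Fin m → ℝ} (hu : ∀ i, S.LogLE v (u i) (α + M i))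
    (hw : ∀ i, S.LogLE v (w i) (β + M i)) :
    S.LogLE v (∏ i, ∏ j ∈ Finset.Ioi i, (u j * w i - u i * w j))
      (m.choose 2 * (α + β) + (m - 1) * ∑ i, M i + S.archWeight v * Real.log m.factorial) := by
  have hsum : ∑ i : Fin m, ((i : ℕ) : ℝ) = m.choose 2 := by
    rw [Fin.sum_univ_eq_sum_range (fun i => (i : ℝ)), Nat.choose_two_right, ← Finset.sum_range_id]
    push_cast
    rfl
  rw [← Matrix.det_projVandermonde]
  have hentry (i j : Fin m) : S.LogLE v (Matrix.projVandermonde u w i j)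
      ((m - 1) * M i + (j * α + (m - 1 - j) * β)) := by
    rw [Matrix.projVandermonde_apply]
    refine (((hu i).pow _).mul ((hw i).pow _)).mono (le_of_eq ?_)
    rw [Fin.val_rev, Nat.cast_sub (Nat.succ_le_of_lt j.2)]
    push_cast
    ring
  refine (LogLE.det hentry).mono (le_of_eq ?_)
  rw [Finset.sum_add_distrib, ← Finset.mul_sum, ← Finset.sum_mul, ← Finset.sum_mul,
    Finset.sum_sub_distrib, hsum, Fintype.card_fin]
  simp only [Finset.sum_const, Finset.card_univ, Fintype.card_fin, nsmul_eq_mul,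
    Nat.cast_choose_two]
  ring

-- The three ways of choosing two of the coordinates of `[x : 1 - x : 1]` give, up to sign, the
-- same Vandermonde determinant; the best of them is used at each place.
lemma logAbv_vandermonde_le {m : ℕ} {x : Fin m → K} (hx : ∀ i, S.IsSolution (x i))
    (hV : ∏ i, ∏ j ∈ Finset.Ioi i, (x j - x i) ≠ 0) (ξ : LogSpace ι) (v : ι) :
    S.logAbv v (∏ i, ∏ j ∈ Finset.Ioi i, (x j - x i)) ≤
      m.choose 2 * ((ξ v).1 + (ξ v).2 - localHeight (ξ v))
      + (m - 1) * ∑ i, localHeight ((S.logVec (x i) - ξ) v)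
      + S.archWeight v * Real.log m.factorial := by
  set M : Fin m → ℝ := fun i => localHeight ((S.logVec (x i) - ξ) v)
  have hfst (i) : S.LogLE v (x i) ((ξ v).1 + M i) :=
    .of_logAbv_le (hx i).ne_zero <|
      sub_le_iff_le_add'.1 (fst_le_localHeight ((S.logVec (x i) - ξ) v))
  have hsnd (i) : S.LogLE v (1 - x i) ((ξ v).2 + M i) :=
    .of_logAbv_le (hx i).one_sub_ne_zero <|
      sub_le_iff_le_add'.1 (snd_le_localHeight ((S.logVec (x i) - ξ) v))
  have hone (i) : S.LogLE v (1 : K) (0 + M i) :=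
    LogLE.one.mono (by rw [zero_add]; exact localHeight_nonneg _)
  have hbound {u w : Fin m → K} {α β : ℝ} (hu : ∀ i, S.LogLE v (u i) (α + M i))
      (hw : ∀ i, S.LogLE v (w i) (β + M i)) (huw : ∀ i j, u j * w i - u i * w j = x j - x i) :=
    LogLE.logAbv_le (by simpa only [huw] using LogLE.prod_projVandermonde hu hw) hV
  rcases localHeight_eq_fst_or_snd_or_zero (ξ v) with h | h | h <;> rw [h]
  · exact (hbound hone hsnd fun i j => by ring).trans_eq (by ring)
  · exact (hbound hfst hone fun i j => by ring).trans_eq (by ring)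
  · exact (hbound hfst hsnd fun i j => by ring).trans_eq (by ring)

lemma choose_two_mul_height_le {m : ℕ} {x : Fin m → K} (hx : ∀ i, S.IsSolution (x i))
    (hinj : Function.Injective x) {ξ : LogSpace ι} (hξ : ξ ∈ sumZero ι) :
    m.choose 2 * height ξ ≤
      S.totalArchWeight * Real.log m.factorial + (m - 1) * ∑ i, height (S.logVec (x i) - ξ) := by
  set V : K := ∏ i, ∏ j ∈ Finset.Ioi i, (x j - x i)
  have hV0 : V ≠ 0 := Finset.prod_ne_zero_iff.2 fun i _ => Finset.prod_ne_zero_iff.2 fun j hj =>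
    sub_ne_zero.2 (hinj.ne (Finset.mem_Ioi.1 hj).ne')
  have hVO : V ∈ S.integers := S.integers.prod_mem fun i _ => S.integers.prod_mem fun j _ =>
    S.integers.sub_mem (hx j).mem (hx i).mem
  have hsum := (sum_logAbv_nonneg hVO hV0).trans
    (Finset.sum_le_sum fun v _ => logAbv_vandermonde_le hx hV0 ξ v)
  rw [Finset.sum_add_distrib, Finset.sum_add_distrib, ← Finset.mul_sum, ← Finset.mul_sum,
    ← Finset.sum_mul, Finset.sum_sub_distrib, Finset.sum_add_distrib, sum_fst_eq_zero hξ,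
    sum_snd_eq_zero hξ, Finset.sum_comm] at hsum
  unfold height totalArchWeight
  linarith

lemma height_logVec_le {x x' : K} (hx : S.IsSolution x) (hx' : S.IsSolution x') (hne : x ≠ x') :
    height (S.logVec x) ≤
      S.totalArchWeight * Real.log 2 + height (S.logVec x' - S.logVec x) := by
  have h := choose_two_mul_height_le (S := S) (x := ![x, x'])
    (by simp [Fin.forall_fin_two, hx, hx'])
    (by simp [Function.Injective, Fin.forall_fin_two, hne, hne.symm]) hx.logVec_mem_sumZero
  simpa [Fin.sum_univ_two, height_zero, show (2 : ℝ) - 1 = 1 by norm_num] using h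

end PlaceSystem

/-! ### Hermite–Padé approximation of powers of `X` and `1 - X` -/

section PadePolynomials

lemma ringChoose_neg_succ (k b : ℕ) :
    Ring.choose (-((k : ℤ) + 1)) b = (-1) ^ b * ((k + b).choose b : ℤ) := by
  rw [Ring.choose_neg, show (k : ℤ) + 1 + b - 1 = ((k + b : ℕ) : ℤ) by push_cast; ring,
    Ring.choose_natCast, Int.negOnePow_def]
  simp [Units.smul_def]

/-- The value at `j` of the integer-valued polynomial of degree `b` with zeros
`a + 1, …, a + b`; its zeros create the gap between `padeLow` and `padeHigh`. -/
noncomputable def padeCoeff (a b j : ℕ) : ℤ := Ring.choose ((j : ℤ) - a - 1) b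

lemma padeCoeff_of_le {a b j : ℕ} (h : j ≤ a) :
    padeCoeff a b j = (-1) ^ b * ((a - j + b).choose b : ℤ) := by
  rw [← ringChoose_neg_succ, padeCoeff, Nat.cast_sub h]
  ring_nf

lemma padeCoeff_add_succ (a b k : ℕ) : padeCoeff a b (a + 1 + k) = (k.choose b : ℤ) := by
  rw [padeCoeff, ← Ring.choose_natCast]
  push_cast
  ring_nf

lemma padeCoeff_eq_sum (a b j : ℕ) : padeCoeff a b j =
    ∑ i ∈ Finset.range (b + 1),
      (j.choose i : ℤ) * ((-1) ^ (b - i) * ((a + (b - i)).choose (b - i) : ℤ)) := by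
  rw [padeCoeff, show (j : ℤ) - a - 1 = j + -((a : ℤ) + 1) by ring,
    Ring.add_choose_eq b (Commute.all _ _), Finset.Nat.sum_antidiagonal_eq_sum_range_succ_mk]
  simp only [Ring.choose_natCast, ringChoose_neg_succ]

lemma sum_choose_mul_choose_mul_neg_pow {R : Type*} [CommRing R] {N i : ℕ} (hi : i ≤ N) (x : R) :
    ∑ j ∈ Finset.range (N + 1), (N.choose j : R) * (j.choose i : R) * (-x) ^ j =
      (N.choose i : R) * (-x) ^ i * (1 - x) ^ (N - i) := by
  obtain ⟨M, rfl⟩ := Nat.exists_eq_add_of_le hi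
  have hlow : ∀ j ∈ Finset.range i,
      ((i + M).choose j : R) * (j.choose i : R) * (-x) ^ j = 0 := fun j hj => by
    simp [Nat.choose_eq_zero_of_lt (Finset.mem_range.1 hj)]
  rw [add_assoc, Finset.sum_range_add, Finset.sum_eq_zero hlow, zero_add, Nat.add_sub_cancel_left,
    sub_eq_neg_add, add_pow, Finset.mul_sum]
  refine Finset.sum_congr rfl fun k _ => ?_
  have hchoose := Nat.choose_mul (n := i + M) (k := i + k) (s := i) (by omega)
  rw [Nat.add_sub_cancel_left, Nat.add_sub_cancel_left] at hchoose
  rw [← Nat.cast_mul, hchoose, pow_add]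
  push_cast
  ring

/-- The remainder term of the Padé identity. -/
noncomputable def padeLow (a b c : ℕ) : Polynomial ℤ :=
  ∑ j ∈ Finset.range (a + 1),
    Polynomial.C ((a + b + c + 1).choose j * ((-1) ^ j * ((a - j + b).choose b : ℤ))) *
      Polynomial.X ^ j

/-- The coefficient of `(1 - X) ^ (a + c + 1)` in the Padé identity. -/
noncomputable def padeMid (a b c : ℕ) : Polynomial ℤ :=
  ∑ i ∈ Finset.range (b + 1),
    Polynomial.C ((a + b + c + 1).choose i * ((a + (b - i)).choose (b - i) : ℤ)) *
      (Polynomial.X ^ i * (1 - Polynomial.X) ^ (b - i))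

/-- The coefficient of `X ^ (a + b + 1)` in the Padé identity. -/
noncomputable def padeHigh (a b c : ℕ) : Polynomial ℤ :=
  ∑ k ∈ Finset.range (c + 1),
    Polynomial.C ((a + b + c + 1).choose (a + b + 1 + k) *
      ((-1) ^ (a + 1 + k) * ((b + k).choose b : ℤ))) * Polynomial.X ^ k

lemma sum_padeCoeff_eq_low_add_high (a b c : ℕ) :
    ∑ j ∈ Finset.range (a + b + c + 1 + 1), Polynomial.C (padeCoeff a b j) *
        (((a + b + c + 1).choose j : Polynomial ℤ) * (-Polynomial.X) ^ j) =
      (-1) ^ b * (padeLow a b c + Polynomial.X ^ (a + b + 1) * padeHigh a b c) := by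
  rw [show a + b + c + 1 + 1 = (a + 1 + b) + (c + 1) by ring, Finset.sum_range_add,
    Finset.sum_range_add, Finset.sum_eq_zero (s := Finset.range b), add_zero, padeLow, padeHigh,
    mul_add, Finset.mul_sum, Finset.mul_sum, Finset.mul_sum]
  · congr 1
    · refine Finset.sum_congr rfl fun j hj => ?_
      rw [padeCoeff_of_le (Nat.lt_succ_iff.1 (Finset.mem_range.1 hj)),
        neg_pow (Polynomial.X : Polynomial ℤ)]
      simp only [map_mul, map_pow, map_neg, map_one, map_natCast]
      ring
    · refine Finset.sum_congr rfl fun k _ => ?_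
      rw [add_assoc (a + 1), padeCoeff_add_succ, neg_pow (Polynomial.X : Polynomial ℤ),
        show a + 1 + (b + k) = a + b + 1 + k by ring]
      simp only [map_mul, map_pow, map_neg, map_one, map_natCast]
      ring
  · intro k hk
    rw [padeCoeff_add_succ, Nat.choose_eq_zero_of_lt (Finset.mem_range.1 hk)]
    simp

lemma sum_padeCoeff_eq_mid (a b c : ℕ) :
    ∑ j ∈ Finset.range (a + b + c + 1 + 1), Polynomial.C (padeCoeff a b j) *
        (((a + b + c + 1).choose j : Polynomial ℤ) * (-Polynomial.X) ^ j) =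
      (-1) ^ b * ((1 - Polynomial.X) ^ (a + c + 1) * padeMid a b c) := by
  simp only [padeCoeff_eq_sum, map_sum, Finset.sum_mul]
  rw [Finset.sum_comm, padeMid, Finset.mul_sum, Finset.mul_sum]
  refine Finset.sum_congr rfl fun i hi => ?_
  obtain ⟨l, rfl⟩ := Nat.exists_eq_add_of_le (Nat.lt_succ_iff.1 (Finset.mem_range.1 hi))
  have hsum := sum_choose_mul_choose_mul_neg_pow (N := a + (i + l) + c + 1) (i := i)
    (by omega) (Polynomial.X : Polynomial ℤ)
  rw [show a + (i + l) + c + 1 - i = a + c + 1 + l by omega, neg_pow, pow_add (1 - _)] at hsum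
  rw [Nat.add_sub_cancel_left]
  trans (-1) ^ l * ((a + l).choose l : Polynomial ℤ) *
    ∑ j ∈ Finset.range (a + (i + l) + c + 1 + 1),
      ((a + (i + l) + c + 1).choose j : Polynomial ℤ) * (j.choose i : Polynomial ℤ) *
        (-Polynomial.X) ^ j
  · rw [Finset.mul_sum]
    refine Finset.sum_congr rfl fun j _ => ?_
    simp only [map_mul, map_pow, map_neg, map_one, map_natCast]
    ring
  · rw [hsum]
    simp only [map_mul, map_natCast]
    ring

lemma pade_identity (a b c : ℕ) :
    padeLow a b c + Polynomial.X ^ (a + b + 1) * padeHigh a b c =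
      (1 - Polynomial.X) ^ (a + c + 1) * padeMid a b c :=
  mul_left_cancel₀ (pow_ne_zero b (by simp : (-1 : Polynomial ℤ) ≠ 0))
    ((sum_padeCoeff_eq_low_add_high a b c).symm.trans (sum_padeCoeff_eq_mid a b c))

end PadePolynomials

/-- `f` is an integral combination of the products `X ^ i * (1 - X) ^ j` with `i + j ≤ n`, in which
the absolute values of the coefficients sum to at most `B`. -/
def IsForm (n : ℕ) (B : ℝ) (f : Polynomial ℤ) : Prop :=
  ∃ (m : ℕ) (c : ℕ → ℤ) (p q : ℕ → ℕ), (∀ i ∈ Finset.range m, p i + q i ≤ n) ∧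
    ∑ i ∈ Finset.range m, |(c i : ℝ)| ≤ B ∧
    f = ∑ i ∈ Finset.range m,
      Polynomial.C (c i) * (Polynomial.X ^ p i * (1 - Polynomial.X) ^ q i)

namespace IsForm

variable {n : ℕ} {B : ℝ} {f : Polynomial ℤ}

lemma mono {n' : ℕ} {B' : ℝ} (h : IsForm n B f) (hn : n ≤ n') (hB : B ≤ B') : IsForm n' B' f := by
  obtain ⟨m, c, p, q, hdeg, hlen, hf⟩ := h
  exact ⟨m, c, p, q, fun i hi => (hdeg i hi).trans hn, hlen.trans hB, hf⟩

lemma neg (h : IsForm n B f) : IsForm n B (-f) := by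
  obtain ⟨m, c, p, q, hdeg, hlen, rfl⟩ := h
  exact ⟨m, fun i => -c i, p, q, hdeg, by simpa using hlen, by simp⟩

lemma X_mul (h : IsForm n B f) : IsForm (n + 1) B (Polynomial.X * f) := by
  obtain ⟨m, c, p, q, hdeg, hlen, rfl⟩ := h
  refine ⟨m, c, fun i => p i + 1, q, fun i hi => ?_, hlen, ?_⟩
  · linarith [hdeg i hi]
  · rw [Finset.mul_sum]
    exact Finset.sum_congr rfl fun i _ => by ring

lemma one_sub_X_mul (h : IsForm n B f) : IsForm (n + 1) B ((1 - Polynomial.X) * f) := by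
  obtain ⟨m, c, p, q, hdeg, hlen, rfl⟩ := h
  refine ⟨m, c, p, fun i => q i + 1, fun i hi => ?_, hlen, ?_⟩
  · linarith [hdeg i hi]
  · rw [Finset.mul_sum]
    exact Finset.sum_congr rfl fun i _ => by ring

lemma natDegree_le (h : IsForm n B f) : f.natDegree ≤ n := by
  obtain ⟨m, c, p, q, hdeg, -, rfl⟩ := h
  refine Polynomial.natDegree_sum_le_of_forall_le _ _ fun i hi => le_trans ?_ (hdeg i hi)
  compute_degree

end IsForm

lemma sum_range_choose_add_le (N t m : ℕ) : ∑ i ∈ Finset.range m, N.choose (t + i) ≤ 2 ^ N := by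
  rw [← Nat.sum_range_choose N]
  refine (Finset.sum_map (Finset.range m) (addLeftEmbedding t) N.choose).symm.trans_le ?_
  refine Finset.sum_le_sum_of_ne_zero fun i _ hi => ?_
  exact Finset.mem_range.2 (Nat.lt_succ_of_le (Nat.le_of_not_lt fun h =>
    hi (Nat.choose_eq_zero_of_lt h)))

lemma isForm_sum_choose {n N t m : ℕ} {e : ℕ → ℤ} {E : ℕ} {p q : ℕ → ℕ}
    (he : ∀ i ∈ Finset.range m, |e i| ≤ E) (hpq : ∀ i ∈ Finset.range m, p i + q i ≤ n) :
    IsForm n (2 ^ N * E) (∑ i ∈ Finset.range m,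
      Polynomial.C (N.choose (t + i) * e i) * (Polynomial.X ^ p i * (1 - Polynomial.X) ^ q i)) := by
  refine ⟨m, _, p, q, hpq, ?_, rfl⟩
  calc ∑ i ∈ Finset.range m, |((N.choose (t + i) * e i : ℤ) : ℝ)|
      ≤ ∑ i ∈ Finset.range m, (N.choose (t + i) : ℝ) * E := by
        refine Finset.sum_le_sum fun i hi => ?_
        push_cast
        rw [abs_mul, Nat.abs_cast]
        gcongr
        exact_mod_cast he i hi
    _ ≤ 2 ^ N * E := by
        rw [← Finset.sum_mul]
        gcongr
        exact_mod_cast sum_range_choose_add_le N t m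

section PadeForms

variable (a b c : ℕ)

lemma abs_neg_one_pow_mul_choose_le {k l s r : ℕ} (h : k ≤ s) :
    |(-1 : ℤ) ^ r * (k.choose l : ℤ)| ≤ ((2 ^ s : ℕ) : ℤ) := by
  rw [abs_mul, abs_pow, abs_neg, abs_one, one_pow, one_mul, Nat.abs_cast, Nat.cast_le]
  exact (Nat.choose_le_two_pow k l).trans (Nat.pow_le_pow_right two_pos h)

lemma isForm_padeLow : IsForm a (2 ^ (a + b + c + 1) * (2 ^ (a + b) : ℕ)) (padeLow a b c) := by
  have h := isForm_sum_choose (n := a) (N := a + b + c + 1) (t := 0) (m := a + 1)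
    (e := fun j => (-1) ^ j * ((a - j + b).choose b : ℤ)) (p := id) (q := 0)
    (fun j _ => abs_neg_one_pow_mul_choose_le (s := a + b) (by omega))
    (fun j hj => Nat.lt_succ_iff.1 (Finset.mem_range.1 hj))
  simpa only [padeLow, zero_add, id, Pi.zero_apply, pow_zero, mul_one] using h

lemma isForm_padeMid : IsForm b (2 ^ (a + b + c + 1) * (2 ^ (a + b) : ℕ)) (padeMid a b c) := by
  have h := isForm_sum_choose (n := b) (N := a + b + c + 1) (t := 0) (m := b + 1)
    (e := fun i => (-1) ^ 0 * ((a + (b - i)).choose (b - i) : ℤ)) (p := id) (q := (b - ·))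
    (fun i _ => abs_neg_one_pow_mul_choose_le (s := a + b) (by omega))
    (fun i hi => (Nat.add_sub_cancel' (Nat.lt_succ_iff.1 (Finset.mem_range.1 hi))).le)
  simpa only [padeMid, zero_add, id, pow_zero, one_mul] using h

lemma isForm_padeHigh : IsForm c (2 ^ (a + b + c + 1) * (2 ^ (b + c) : ℕ)) (padeHigh a b c) := by
  have h := isForm_sum_choose (n := c) (N := a + b + c + 1) (t := a + b + 1) (m := c + 1)
    (e := fun k => (-1) ^ (a + 1 + k) * ((b + k).choose b : ℤ)) (p := id) (q := 0)
    (fun k hk => abs_neg_one_pow_mul_choose_le (s := b + c)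
      (by have := Finset.mem_range.1 hk; omega))
    (fun k hk => Nat.lt_succ_iff.1 (Finset.mem_range.1 hk))
  simpa only [padeHigh, id, Pi.zero_apply, pow_zero, mul_one] using h

lemma eval_zero_padeMid : (padeMid a b c).eval 0 = ((a + b).choose b : ℤ) := by
  rw [padeMid, Polynomial.eval_finsetSum, Finset.sum_range_succ']
  simp

lemma eval_zero_padeHigh :
    (padeHigh a b c).eval 0 = (a + b + c + 1).choose (a + b + 1) * (-1) ^ (a + 1) := by
  rw [padeHigh, Polynomial.eval_finsetSum, Finset.sum_range_succ']
  simp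

end PadeForms

/-- A Hermite–Padé relation of degree `n` between `X ^ (2 * n)`, `(1 - X) ^ (2 * n)` and `1` with
small integral coefficients. -/
structure IsPadeRelation (n : ℕ) (p₁ p₂ p₃ : Polynomial ℤ) : Prop where
  form₁ : IsForm n (2 ^ (5 * n)) p₁
  form₂ : IsForm n (2 ^ (5 * n)) p₂
  form₃ : IsForm n (2 ^ (5 * n)) p₃
  relation : p₁ * Polynomial.X ^ (2 * n) + p₂ * (1 - Polynomial.X) ^ (2 * n) + p₃ = 0

lemma IsPadeRelation.natDegree_cross_eq_zero {n : ℕ} {p₁ p₂ p₃ q₁ q₂ q₃ : Polynomial ℤ}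
    (hp : IsPadeRelation n p₁ p₂ p₃) (hq : IsPadeRelation n q₁ q₂ q₃)
    (hne : p₁ * q₂ - q₁ * p₂ ≠ 0) : (p₁ * q₂ - q₁ * p₂).natDegree = 0 := by
  have hcross : (p₁ * q₂ - q₁ * p₂) * Polynomial.X ^ (2 * n) = p₂ * q₃ - q₂ * p₃ := by
    linear_combination q₂ * hp.relation - p₂ * hq.relation
  have hdeg : (p₂ * q₃ - q₂ * p₃).natDegree ≤ max (n + n) (n + n) :=
    Polynomial.natDegree_sub_le_of_le
      (Polynomial.natDegree_mul_le_of_le hp.form₂.natDegree_le hq.form₃.natDegree_le)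
      (Polynomial.natDegree_mul_le_of_le hq.form₂.natDegree_le hp.form₃.natDegree_le)
  rw [← hcross, Polynomial.natDegree_mul_X_pow _ hne] at hdeg
  omega

lemma isPadeRelation_balanced_left (k : ℕ) :
    IsPadeRelation (k + 1) (Polynomial.X * padeHigh (k + 1) (k + 1) k)
      (-padeMid (k + 1) (k + 1) k) (padeLow (k + 1) (k + 1) k) where
  form₁ := (isForm_padeHigh _ _ _).X_mul.mono le_rfl (by
    push_cast
    rw [← pow_add]
    exact pow_le_pow_right₀ one_le_two (by omega))
  form₂ := (isForm_padeMid _ _ _).neg.mono le_rfl (by push_cast; rw [← pow_add]; ring_nf; rfl)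
  form₃ := (isForm_padeLow _ _ _).mono le_rfl (by push_cast; rw [← pow_add]; ring_nf; rfl)
  relation := by
    have h := pade_identity (k + 1) (k + 1) k
    rw [show k + 1 + k + 1 = 2 * (k + 1) by ring] at h
    linear_combination h

lemma isPadeRelation_balanced_right (k : ℕ) :
    IsPadeRelation (k + 1) (padeHigh (k + 1) k (k + 1))
      (-((1 - Polynomial.X) * padeMid (k + 1) k (k + 1))) (padeLow (k + 1) k (k + 1)) where
  form₁ := (isForm_padeHigh _ _ _).mono le_rfl (by
    push_cast
    rw [← pow_add]
    exact pow_le_pow_right₀ one_le_two (by omega))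
  form₂ := (isForm_padeMid _ _ _).one_sub_X_mul.neg.mono le_rfl (by
    push_cast
    rw [← pow_add]
    exact pow_le_pow_right₀ one_le_two (by omega))
  form₃ := (isForm_padeLow _ _ _).mono le_rfl (by
    push_cast
    rw [← pow_add]
    exact pow_le_pow_right₀ one_le_two (by omega))
  relation := by
    have h := pade_identity (k + 1) k (k + 1)
    rw [show k + 1 + k + 1 = 2 * (k + 1) by ring] at h
    linear_combination h

lemma exists_isPadeRelation_pair {n : ℕ} (hn : n ≠ 0) :
    ∃ p₁ p₂ p₃ q₁ q₂ q₃ : Polynomial ℤ, IsPadeRelation n p₁ p₂ p₃ ∧ IsPadeRelation n q₁ q₂ q₃ ∧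
      ∃ c : ℤ, c ≠ 0 ∧ p₁ * q₂ - q₁ * p₂ = Polynomial.C c := by
  obtain ⟨k, rfl⟩ := Nat.exists_eq_add_one_of_ne_zero hn
  have hp := isPadeRelation_balanced_left k
  have hq := isPadeRelation_balanced_right k
  set m := Polynomial.X * padeHigh (k + 1) (k + 1) k *
    -((1 - Polynomial.X) * padeMid (k + 1) k (k + 1)) -
    padeHigh (k + 1) k (k + 1) * -padeMid (k + 1) (k + 1) k with hm
  have hm0 : m.coeff 0 ≠ 0 := by
    rw [hm, Polynomial.coeff_zero_eq_eval_zero]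
    simp only [Polynomial.eval_add, Polynomial.eval_mul, Polynomial.eval_neg, Polynomial.eval_X,
      eval_zero_padeHigh, eval_zero_padeMid, zero_mul, mul_neg, neg_zero, sub_neg_eq_add, zero_add]
    have hmid := Nat.choose_pos (n := k + 1 + (k + 1)) (k := k + 1) (by omega)
    have hhigh := Nat.choose_pos (n := k + 1 + k + (k + 1) + 1) (k := k + 1 + k + 1) (by omega)
    positivity
  exact ⟨_, _, _, _, _, _, hp, hq, _, hm0, Polynomial.eq_C_of_natDegree_eq_zero
    (hp.natDegree_cross_eq_zero hq fun h => hm0 (by rw [hm, h, Polynomial.coeff_zero]))⟩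

namespace PlaceSystem

variable {K : Type*} [Field K] {ι : Type*} [Fintype ι] {S : PlaceSystem K ι} {x x' : K}

lemma aeval_mem_integers (f : Polynomial ℤ) (hx : x ∈ S.integers) :
    Polynomial.aeval x f ∈ S.integers := by
  rw [← Polynomial.aeval_subalgebra_coe f (subalgebraOfSubring S.integers) ⟨x, hx⟩]
  exact Subtype.property _

lemma LogLE.aeval_of_isForm {n : ℕ} {B : ℝ} {f : Polynomial ℤ} (hf : IsForm n B f) (hB : 1 ≤ B)
    (h : S.IsSolution x) (v : ι) :
    S.LogLE v (Polynomial.aeval x f)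
      (n * localHeight (S.logVec x v) + S.archWeight v * Real.log B) := by
  obtain ⟨m, c, p, q, hdeg, hlen, rfl⟩ := hf
  simp only [map_sum, map_mul, map_pow, map_sub, map_one, Polynomial.aeval_X, eq_intCast,
    map_intCast]
  refine LogLE.sum (S := S) (Finset.range m) c _ hB hlen fun i hi => ?_
  have hx : S.LogLE v x (localHeight (S.logVec x v)) :=
    .of_logAbv_le h.ne_zero (fst_le_localHeight (S.logVec x v))
  have hy : S.LogLE v (1 - x) (localHeight (S.logVec x v)) :=
    .of_logAbv_le h.one_sub_ne_zero (snd_le_localHeight (S.logVec x v))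
  refine ((hx.pow _).mul (hy.pow _)).mono ?_
  rw [← add_mul]
  exact mul_le_mul_of_nonneg_right (by exact_mod_cast hdeg i hi) (localHeight_nonneg _)

lemma LogLE.aeval_of_isForm_two_pow {n : ℕ} {f : Polynomial ℤ} (hf : IsForm n (2 ^ (5 * n)) f)
    (h : S.IsSolution x) (v : ι) :
    S.LogLE v (Polynomial.aeval x f)
      (n * localHeight (S.logVec x v) + S.archWeight v * (5 * n * Real.log 2)) := by
  simpa using LogLE.aeval_of_isForm hf (one_le_pow₀ one_le_two) h v

/-- The remainder `x' / x ^ (2 * n) * p₂ x - (1 - x') / (1 - x) ^ (2 * n) * p₁ x` of a Padé relation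
at a pair of solutions; it is small when `x'` is close to `x ^ (2 * n)`. -/
noncomputable def padeRemainder (n : ℕ) (p₁ p₂ : Polynomial ℤ) (x x' : K) : K :=
  x' / x ^ (2 * n) * Polynomial.aeval x p₂ - (1 - x') / (1 - x) ^ (2 * n) * Polynomial.aeval x p₁

lemma padeRemainder_mem_integers (n : ℕ) (p₁ p₂ : Polynomial ℤ) (h : S.IsSolution x)
    (h' : S.IsSolution x') : padeRemainder n p₁ p₂ x x' ∈ S.integers := by
  rw [padeRemainder, div_eq_mul_inv, div_eq_mul_inv, ← inv_pow, ← inv_pow]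
  exact sub_mem
    (mul_mem (mul_mem h'.mem (pow_mem h.inv_mem _)) (aeval_mem_integers p₂ h.mem))
    (mul_mem (mul_mem h'.one_sub_mem (pow_mem h.one_sub_inv_mem _)) (aeval_mem_integers p₁ h.mem))

section LocalEstimate

variable {n : ℕ} {p₁ p₂ p₃ : Polynomial ℤ} (hp : IsPadeRelation n p₁ p₂ p₃)

include hp in
lemma padeRemainder_mul_pow (hx : x ≠ 0) (hy : 1 - x ≠ 0) :
    padeRemainder n p₁ p₂ x x' * x ^ (2 * n) = Polynomial.aeval x p₂ -
      -((1 - x') / (1 - x) ^ (2 * n)) * Polynomial.aeval x p₃ := by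
  have hrel := congrArg (Polynomial.aeval x) hp.relation
  simp only [map_add, map_mul, map_pow, map_sub, map_one, map_zero, Polynomial.aeval_X] at hrel
  have hx' : x' / x ^ (2 * n) * x ^ (2 * n) = x' := div_mul_cancel₀ _ (pow_ne_zero _ hx)
  have hy' : (1 - x') / (1 - x) ^ (2 * n) * (1 - x) ^ (2 * n) = 1 - x' :=
    div_mul_cancel₀ _ (pow_ne_zero _ hy)
  rw [padeRemainder]
  linear_combination Polynomial.aeval x p₂ * (hx' + hy') -
    (1 - x') / (1 - x) ^ (2 * n) * hrel

include hp in
lemma padeRemainder_mul_one_sub_pow (hx : x ≠ 0) (hy : 1 - x ≠ 0) :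
    padeRemainder n p₁ p₂ x x' * (1 - x) ^ (2 * n) =
      -(x' / x ^ (2 * n)) * Polynomial.aeval x p₃ - Polynomial.aeval x p₁ := by
  have hrel := congrArg (Polynomial.aeval x) hp.relation
  simp only [map_add, map_mul, map_pow, map_sub, map_one, map_zero, Polynomial.aeval_X] at hrel
  have hx' : x' / x ^ (2 * n) * x ^ (2 * n) = x' := div_mul_cancel₀ _ (pow_ne_zero _ hx)
  have hy' : (1 - x') / (1 - x) ^ (2 * n) * (1 - x) ^ (2 * n) = 1 - x' :=
    div_mul_cancel₀ _ (pow_ne_zero _ hy)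
  rw [padeRemainder]
  linear_combination x' / x ^ (2 * n) * hrel - Polynomial.aeval x p₁ * (hx' + hy')

lemma logLE_div_pow_of_logVec (h : S.IsSolution x) (h' : S.IsSolution x') (n : ℕ) (v : ι) :
    S.LogLE v (x' / x ^ (2 * n)) (localHeight ((S.logVec x' - (2 * n : ℝ) • S.logVec x) v)) ∧
      S.LogLE v ((1 - x') / (1 - x) ^ (2 * n))
        (localHeight ((S.logVec x' - (2 * n : ℝ) • S.logVec x) v)) := by
  have hlog : ∀ {y y' : K}, y ≠ 0 → y' ≠ 0 →
      S.logAbv v (y' / y ^ (2 * n)) = S.logAbv v y' - 2 * n * S.logAbv v y := by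
    intro y y' hy hy'
    rw [div_eq_mul_inv, logAbv_mul hy' (inv_ne_zero (pow_ne_zero _ hy)), logAbv_inv, logAbv_pow]
    push_cast
    ring
  refine ⟨.of_logAbv_le (div_ne_zero h'.ne_zero (pow_ne_zero _ h.ne_zero)) ?_,
    .of_logAbv_le (div_ne_zero h'.one_sub_ne_zero (pow_ne_zero _ h.one_sub_ne_zero)) ?_⟩
  · rw [hlog h.ne_zero h'.ne_zero]
    exact fst_le_localHeight ((S.logVec x' - (2 * n : ℝ) • S.logVec x) v)
  · rw [hlog h.one_sub_ne_zero h'.one_sub_ne_zero]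
    exact snd_le_localHeight ((S.logVec x' - (2 * n : ℝ) • S.logVec x) v)

include hp in
lemma logAbv_padeRemainder_le (hn : 1 ≤ n) (h : S.IsSolution x) (h' : S.IsSolution x')
    (hne : padeRemainder n p₁ p₂ x x' ≠ 0) (v : ι) :
    S.logAbv v (padeRemainder n p₁ p₂ x x') + n * localHeight (S.logVec x v) ≤
      localHeight ((S.logVec x' - (2 * n : ℝ) • S.logVec x) v) +
        S.archWeight v * (6 * n * Real.log 2) := by
  set M := localHeight ((S.logVec x' - (2 * n : ℝ) • S.logVec x) v)
  have hM : 0 ≤ M := localHeight_nonneg _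
  obtain ⟨hZ₁, hZ₂⟩ := logLE_div_pow_of_logVec h h' n v
  have hp₁ := LogLE.aeval_of_isForm_two_pow hp.form₁ h v
  have hp₂ := LogLE.aeval_of_isForm_two_pow hp.form₂ h v
  have hp₃ := LogLE.aeval_of_isForm_two_pow hp.form₃ h v
  have hxpow : x ^ (2 * n) ≠ 0 := pow_ne_zero _ h.ne_zero
  have hypow : (1 - x) ^ (2 * n) ≠ 0 := pow_ne_zero _ h.one_sub_ne_zero
  have hconst : S.archWeight v * Real.log 2 ≤ n * (S.archWeight v * Real.log 2) :=
    le_mul_of_one_le_left (mul_nonneg (S.archWeight_nonneg v) (Real.log_nonneg one_le_two))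
      (by exact_mod_cast hn)
  have hzero : S.logAbv v (padeRemainder n p₁ p₂ x x') ≤ _ :=
    ((hZ₁.mul hp₂).sub (hZ₂.mul hp₁)).logAbv_le hne
  have hfst := (hp₂.mono (le_add_of_nonneg_left hM)).sub (hZ₂.neg.mul hp₃)
  rw [← padeRemainder_mul_pow hp h.ne_zero h.one_sub_ne_zero] at hfst
  have hsnd := (hZ₁.neg.mul hp₃).sub (hp₁.mono (le_add_of_nonneg_left hM))
  rw [← padeRemainder_mul_one_sub_pow hp h.ne_zero h.one_sub_ne_zero] at hsnd
  have hfst := hfst.logAbv_le (mul_ne_zero hne hxpow)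
  have hsnd := hsnd.logAbv_le (mul_ne_zero hne hypow)
  rw [logAbv_mul hne hxpow, logAbv_pow] at hfst
  rw [logAbv_mul hne hypow, logAbv_pow] at hsnd
  push_cast at hfst hsnd
  have hmax : localHeight (S.logVec x v) = S.logAbv v x ∨
      localHeight (S.logVec x v) = S.logAbv v (1 - x) ∨ localHeight (S.logVec x v) = 0 :=
    localHeight_eq_fst_or_snd_or_zero _
  rcases hmax with hmax | hmax | hmax <;> rw [hmax] at hzero hfst hsnd ⊢ <;> linarith

include hp in
lemma mul_height_le_of_padeRemainder_ne_zero (hn : 1 ≤ n) (h : S.IsSolution x)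
    (h' : S.IsSolution x') (hne : padeRemainder n p₁ p₂ x x' ≠ 0) :
    n * height (S.logVec x) ≤ height (S.logVec x' - (2 * n : ℝ) • S.logVec x) +
      S.totalArchWeight * (6 * n * Real.log 2) := by
  have hnonneg := S.sum_logAbv_nonneg (padeRemainder_mem_integers n p₁ p₂ h h') hne
  have hsum := Finset.sum_le_sum fun v (_ : v ∈ Finset.univ) =>
    logAbv_padeRemainder_le hp hn h h' hne v
  rw [Finset.sum_add_distrib, Finset.sum_add_distrib, ← Finset.mul_sum, ← Finset.sum_mul] at hsum
  unfold height totalArchWeight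
  linarith

end LocalEstimate

lemma mul_height_logVec_le [CharZero K] {n : ℕ} (hn : 1 ≤ n) (h : S.IsSolution x)
    (h' : S.IsSolution x') :
    n * height (S.logVec x) ≤ height (S.logVec x' - (2 * n : ℝ) • S.logVec x) +
      S.totalArchWeight * (6 * n * Real.log 2) := by
  obtain ⟨p₁, p₂, p₃, q₁, q₂, q₃, hp, hq, c, hc, hcross⟩ :=
    exists_isPadeRelation_pair (Nat.one_le_iff_ne_zero.1 hn)
  by_cases hp0 : padeRemainder n p₁ p₂ x x' = 0
  · refine mul_height_le_of_padeRemainder_ne_zero hq hn h h' fun hq0 => hc ?_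
    have hx : x' / x ^ (2 * n) ≠ 0 := div_ne_zero h'.ne_zero (pow_ne_zero _ h.ne_zero)
    have hcross' := congrArg (Polynomial.aeval x) hcross
    simp only [map_sub, map_mul, eq_intCast, map_intCast] at hcross'
    rw [padeRemainder] at hp0 hq0
    refine Int.cast_eq_zero.1 (mul_left_cancel₀ hx ?_ : (c : K) = 0)
    linear_combination Polynomial.aeval x p₁ * hq0 - Polynomial.aeval x q₁ * hp0 -
      x' / x ^ (2 * n) * hcross'
  · exact mul_height_le_of_padeRemainder_ne_zero hp hn h h' hp0

end PlaceSystem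

/-! ### Packing for asymmetric norms -/

open MeasureTheory Pointwise in
lemma sum_measure_le_mul_measure {E α : Type*} [MeasurableSpace E] (μ : Measure E) {I : Finset α}
    {A : α → Set E} {B : Set E} (hA : ∀ i ∈ I, MeasurableSet (A i)) (hB : MeasurableSet B)
    (hsub : ∀ i ∈ I, A i ⊆ B) {M : ℕ} (hM : ∀ ξ, (I.filter fun i => ξ ∈ A i).card ≤ M) :
    ∑ i ∈ I, μ (A i) ≤ M * μ B :=
  calc ∑ i ∈ I, μ (A i) = ∑ i ∈ I, ∫⁻ ξ, (A i).indicator 1 ξ ∂μ :=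
        Finset.sum_congr rfl fun i hi => (lintegral_indicator_one (hA i hi)).symm
    _ = ∫⁻ ξ, ∑ i ∈ I, (A i).indicator 1 ξ ∂μ :=
        (lintegral_finsetSum' _ fun i hi => (measurable_one.indicator (hA i hi)).aemeasurable).symm
    _ ≤ ∫⁻ ξ, B.indicator (fun _ => (M : ENNReal)) ξ ∂μ := by
        refine lintegral_mono fun ξ => ?_
        simp only [Set.indicator_apply, Pi.one_apply, Finset.sum_boole]
        split_ifs with hξ
        · exact_mod_cast hM ξ
        · rw [Finset.filter_false_of_mem fun i hi hmem => hξ (hsub i hi hmem)]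
          simp
    _ = M * μ B := lintegral_indicator_const hB _

/-- A continuous, positively homogeneous and subadditive function with bounded unit ball, symmetric
up to a factor `2`. Heights on the space of logarithmic vectors are of this kind. -/
structure IsAsymmetricNorm {E : Type*} [NormedAddCommGroup E] [NormedSpace ℝ E] (h : E → ℝ) :
    Prop where
  continuous : Continuous h
  smul : ∀ c : ℝ, 0 ≤ c → ∀ x, h (c • x) = c * h x
  add_le : ∀ x y, h (x + y) ≤ h x + h y
  neg_le : ∀ x, h (-x) ≤ 2 * h x
  isBounded : Bornology.IsBounded {x | h x < 1}

namespace IsAsymmetricNorm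

open MeasureTheory Pointwise Module

variable {E : Type*} [NormedAddCommGroup E] [NormedSpace ℝ E] {h : E → ℝ}

lemma map_zero (hh : IsAsymmetricNorm h) : h 0 = 0 := by
  simpa using hh.smul 0 le_rfl 0

lemma isOpen_ball (hh : IsAsymmetricNorm h) (t : ℝ) : IsOpen {x | h x < t} :=
  isOpen_lt hh.continuous continuous_const

lemma ball_eq_smul (hh : IsAsymmetricNorm h) {t : ℝ} (ht : 0 < t) :
    {x | h x < t} = t • {x | h x < 1} := by
  ext x
  rw [Set.mem_smul_set_iff_inv_smul_mem₀ ht.ne', Set.mem_ofPred_eq, Set.mem_ofPred_eq,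
    hh.smul _ (inv_nonneg.2 ht.le), inv_mul_lt_iff₀ ht, mul_one]

variable [FiniteDimensional ℝ E]

lemma addHaar_ball [MeasurableSpace E] [BorelSpace E] (hh : IsAsymmetricNorm h) (μ : Measure E)
    [μ.IsAddHaarMeasure] {t : ℝ} (ht : 0 < t) :
    μ {x | h x < t} = ENNReal.ofReal (t ^ finrank ℝ E) * μ {x | h x < 1} := by
  rw [hh.ball_eq_smul ht, Measure.addHaar_smul, abs_of_nonneg (by positivity)]

theorem card_mul_pow_finrank_le (hh : IsAsymmetricNorm h) {α : Type*} {I : Finset α} {P : α → E}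
    {R ρ : ℝ} (hρ : 0 < ρ) (hR : 0 ≤ R) (hP : ∀ i ∈ I, h (P i) ≤ R) {M : ℕ}
    (hM : ∀ ξ, (I.filter fun i => h (P i - ξ) < ρ).card ≤ M) :
    (I.card : ℝ) * ρ ^ finrank ℝ E ≤ M * (R + 2 * ρ) ^ finrank ℝ E := by
  borelize E
  let μ : Measure E := Measure.addHaar
  have hpos : μ {x | h x < 1} ≠ 0 :=
    ((hh.isOpen_ball 1).measure_pos μ ⟨0, by simp [hh.map_zero]⟩).ne'
  have hfin : μ {x | h x < 1} ≠ ⊤ := hh.isBounded.measure_lt_top.ne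
  have htranslate : ∀ i, μ {ξ | h (P i - ξ) < ρ} =
      ENNReal.ofReal (ρ ^ finrank ℝ E) * μ {x | h x < 1} := fun i =>
    ((Measure.measurePreserving_sub_left μ (P i)).measure_preimage
      (hh.isOpen_ball ρ).measurableSet.nullMeasurableSet).trans (hh.addHaar_ball μ hρ)
  have hcover : ∀ i ∈ I, {ξ | h (P i - ξ) < ρ} ⊆ {ξ | h ξ < R + 2 * ρ} := by
    intro i hi ξ (hξ : h (P i - ξ) < ρ)
    have hadd := hh.add_le (P i) (-(P i - ξ))
    rw [← sub_eq_add_neg, sub_sub_cancel] at hadd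
    exact hadd.trans_lt (by linarith [hP i hi, hh.neg_le (P i - ξ)])
  have hcount := sum_measure_le_mul_measure μ
    (A := fun i => {ξ | h (P i - ξ) < ρ}) (fun i _ => ((hh.isOpen_ball ρ).preimage
      (continuous_const.sub continuous_id)).measurableSet)
    (hh.isOpen_ball (R + 2 * ρ)).measurableSet hcover hM
  rw [Finset.sum_congr rfl fun i _ => htranslate i, Finset.sum_const, nsmul_eq_mul,
    hh.addHaar_ball μ (show 0 < R + 2 * ρ by positivity), ← mul_assoc, ← mul_assoc,
    ENNReal.mul_le_mul_iff_left hpos hfin, ← ENNReal.ofReal_natCast, ← ENNReal.ofReal_natCast,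
    ← ENNReal.ofReal_mul (by positivity), ← ENNReal.ofReal_mul (by positivity),
    ENNReal.ofReal_le_ofReal_iff (by positivity)] at hcount
  exact hcount

end IsAsymmetricNorm

namespace LogSpace

variable {ι : Type*} [Fintype ι]

lemma continuous_height : Continuous (height : LogSpace ι → ℝ) := by
  unfold height localHeight
  fun_prop

lemma localHeight_le_height (ξ : LogSpace ι) (v : ι) : localHeight (ξ v) ≤ height ξ :=
  Finset.single_le_sum (f := fun v => localHeight (ξ v)) (fun _ _ => localHeight_nonneg _)
    (Finset.mem_univ v)

lemma norm_le_two_mul_height {ξ : LogSpace ι} (hξ : ξ ∈ sumZero ι) : ‖ξ‖ ≤ 2 * height ξ := by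
  have hnonneg := height_nonneg ξ
  refine (pi_norm_le_iff_of_nonneg (by linarith)).2 fun v => ?_
  have hpos := localHeight_le_height ξ v
  have hneg := (localHeight_le_height (-ξ) v).trans (height_neg_le hξ)
  have hfst := fst_le_localHeight ((-ξ) v)
  have hsnd := snd_le_localHeight ((-ξ) v)
  rw [Pi.neg_apply] at hneg hfst hsnd
  refine max_le (abs_le.2 ⟨?_, ?_⟩) (abs_le.2 ⟨?_, ?_⟩)
  · linarith [Prod.fst_neg (ξ v)]
  · linarith [fst_le_localHeight (ξ v)]
  · linarith [Prod.snd_neg (ξ v)]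
  · linarith [snd_le_localHeight (ξ v)]

variable {V : Submodule ℝ (LogSpace ι)}

lemma isAsymmetricNorm_height (hV : V ≤ sumZero ι) :
    IsAsymmetricNorm fun ξ : V => height (ξ : LogSpace ι) where
  continuous := continuous_height.comp continuous_subtype_val
  smul _ hc _ := height_smul hc _
  add_le _ _ := height_add_le _ _
  neg_le ξ := height_neg_le (hV ξ.2)
  isBounded := Metric.isBounded_closedBall (x := (0 : V)) (r := 2) |>.subset fun ξ hξ => by
    rw [mem_closedBall_zero_iff]
    exact (norm_le_two_mul_height (hV ξ.2)).trans (by linarith [Set.mem_ofPred.1 hξ])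

lemma card_le_mul_pow_finrank (hV : V ≤ sumZero ι) {α : Type*} {I : Finset α} {P : α → LogSpace ι}
    (hPV : ∀ i ∈ I, P i ∈ V) {R ρ : ℝ} (hρ : 0 < ρ) (hR : 0 ≤ R)
    (hP : ∀ i ∈ I, height (P i) ≤ R) {M c : ℕ} (hc : R + 2 * ρ ≤ c * ρ)
    (hM : ∀ ξ ∈ V, (I.filter fun i => height (P i - ξ) < ρ).card ≤ M) :
    I.card ≤ M * c ^ Module.finrank ℝ V := by
  have hpack := (isAsymmetricNorm_height hV).card_mul_pow_finrank_le (I := I.attach)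
    (P := fun i => ⟨P i, hPV i i.2⟩) hρ hR (fun i _ => hP i i.2) (M := M) fun ξ => by
      refine (congrArg Finset.card (Finset.filter_attach
        (fun i => height (P i - (ξ : LogSpace ι)) < ρ) I)).trans_le ?_
      rw [Finset.card_map, Finset.card_attach]
      exact hM ξ ξ.2
  rw [Finset.card_attach] at hpack
  have hle : (I.card : ℝ) * ρ ^ Module.finrank ℝ V ≤
      M * (c : ℝ) ^ Module.finrank ℝ V * ρ ^ Module.finrank ℝ V := by
    rw [mul_assoc, ← mul_pow]
    exact hpack.trans (by gcongr)
  exact_mod_cast le_of_mul_le_mul_right hle (by positivity)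

end LogSpace

/-! ### Counting solutions of the unit equation -/

lemma exists_mul_pow_le_of_forall_ne {α : Type*} {h : α → ℝ} {q a : ℝ} (hq : 0 ≤ q) (k : ℕ)
    {G : Finset α} (hG : G.card = k + 1) (ha : ∀ i ∈ G, a ≤ h i)
    (hgap : ∀ i ∈ G, ∀ j ∈ G, i ≠ j → h i ≤ h j → q * h i ≤ h j) : ∃ i ∈ G, a * q ^ k ≤ h i := by
  induction k generalizing G with
  | zero =>
    obtain ⟨i, hi⟩ := Finset.card_pos.1 (by omega : 0 < G.card)
    exact ⟨i, hi, by simpa using ha i hi⟩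
  | succ k ih =>
    obtain ⟨i, hi, hmax⟩ := Finset.exists_max_image G h (Finset.card_pos.1 (by omega))
    have hsub := Finset.erase_subset i G
    obtain ⟨j, hj, hjk⟩ := ih (G := G.erase i) (by rw [Finset.card_erase_of_mem hi]; omega)
      (fun j hj => ha j (hsub hj)) (fun j hj l hl => hgap j (hsub hj) l (hsub hl))
    refine ⟨i, hi, ?_⟩
    calc a * q ^ (k + 1) = q * (a * q ^ k) := by ring
      _ ≤ q * h j := mul_le_mul_of_nonneg_left hjk hq
      _ ≤ h i := hgap j (hsub hj) i hi (Finset.ne_of_mem_erase hj) (hmax j (hsub hj))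

lemma card_le_of_forall_ne_of_lt_mul_pow {α : Type*} {h : α → ℝ} {q a b : ℝ} {k : ℕ} (hq : 1 ≤ q)
    (ha₀ : 0 ≤ a) (hk : b < a * q ^ k) {G : Finset α} (ha : ∀ i ∈ G, a ≤ h i)
    (hb : ∀ i ∈ G, h i ≤ b) (hgap : ∀ i ∈ G, ∀ j ∈ G, i ≠ j → h i ≤ h j → q * h i ≤ h j) :
    G.card ≤ k := by
  by_contra! hcard
  obtain ⟨l, hl⟩ := Nat.exists_eq_add_one_of_ne_zero (Nat.ne_zero_of_lt hcard)
  obtain ⟨i, hi, hgrow⟩ := exists_mul_pow_le_of_forall_ne (by linarith) l hl ha hgap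
  have hpow : a * q ^ k ≤ a * q ^ l :=
    mul_le_mul_of_nonneg_left (pow_le_pow_right₀ hq (by omega)) ha₀
  linarith [hb i hi]

lemma le_log_twentySeven_div_four : (1.9 : ℝ) ≤ Real.log (27 / 4) := by
  rw [Real.le_log_iff_exp_le (by norm_num)]
  refine le_of_pow_le_pow_left₀ (n := 10) (by norm_num) (by norm_num) ?_
  calc Real.exp 1.9 ^ 10 = Real.exp 1 ^ 19 := by
        rw [← Real.exp_nat_mul, ← Real.exp_nat_mul]
        norm_num
    _ ≤ 2.7182818286 ^ 19 := by
        gcongr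
        exact Real.exp_one_lt_d9.le
    _ ≤ (27 / 4) ^ 10 := by norm_num

set_option exponentiation.threshold 2000 in
lemma log_factorial_two_hundred_le : Real.log (Nat.factorial 200) ≤ 875 := by
  rw [Real.log_le_iff_le_exp (by exact_mod_cast Nat.factorial_pos 200)]
  have hfact : ((Nat.factorial 200 : ℕ) : ℝ) * 10 ^ 875 ≤ 27 ^ 875 := by
    have : Nat.factorial 200 * 10 ^ 875 ≤ 27 ^ 875 := by norm_num [Nat.factorial]
    exact_mod_cast this
  calc ((Nat.factorial 200 : ℕ) : ℝ) ≤ 27 ^ 875 / 10 ^ 875 := by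
        rwa [le_div_iff₀ (by positivity)]
    _ = 2.7 ^ 875 := by rw [← div_pow]; norm_num
    _ ≤ Real.exp 1 ^ 875 := by
        gcongr
        linarith [Real.exp_one_gt_d9]
    _ = Real.exp 875 := by
        rw [← Real.exp_nat_mul]
        norm_num

lemma card_filter_sq_sub_add_one_eq_zero_le {K : Type*} [Field K] (X : Finset K) :
    (X.filter fun x => x ^ 2 - x + 1 = 0).card ≤ 2 := by
  let f : Polynomial K := Polynomial.X ^ 2 - Polynomial.X + 1
  have hdeg : f.natDegree = 2 := by
    unfold f
    compute_degree!
  have hf : f ≠ 0 := Polynomial.ne_zero_of_natDegree_gt (n := 0) (by omega)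
  refine (Polynomial.card_le_degree_of_subset_roots (p := f) fun x hx => ?_).trans hdeg.le
  simpa [f, hf] using (Finset.mem_filter.1 hx).2

lemma two_add_add_le_three_mul_seven_pow {r s : ℕ} (h : r + 1 ≤ 2 * s) :
    2 + 199 * 23 ^ r + 41 * 20 ^ r ≤ 3 * 7 ^ (4 * s) := by
  have hpow : 49 * 49 ^ r ≤ 7 ^ (4 * s) := by
    rw [← pow_succ', show 49 = 7 ^ 2 by norm_num, ← pow_mul]
    exact Nat.pow_le_pow_right (by norm_num) (by omega)
  cases r with
  | zero =>
    have : 7 ^ 4 ≤ 7 ^ (4 * s) := Nat.pow_le_pow_right (by norm_num) (by omega)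
    omega
  | succ r =>
    have h₂₃ : 23 ^ r ≤ 49 ^ r := Nat.pow_le_pow_left (by norm_num) r
    have h₂₀ : 20 ^ r ≤ 49 ^ r := Nat.pow_le_pow_left (by norm_num) r
    have h₁ : 1 ≤ 49 ^ r := Nat.one_le_pow' _ _
    simp only [pow_succ] at hpow ⊢
    omega

namespace PlaceSystem

variable {K : Type*} [Field K] {ι : Type*} [Fintype ι] {S : PlaceSystem K ι}

lemma card_choose_two_mul_height_le {X : Finset K} (hX : ∀ x ∈ X, S.IsSolution x)
    {ξ : LogSpace ι} (hξ : ξ ∈ sumZero ι) :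
    X.card.choose 2 * height ξ ≤ S.totalArchWeight * Real.log X.card.factorial +
      (X.card - 1) * ∑ x ∈ X, height (S.logVec x - ξ) := by
  rw [← Finset.sum_coe_sort X fun x => height (S.logVec x - ξ), ← X.equivFin.symm.sum_comp]
  exact choose_two_mul_height_le (x := fun i => (X.equivFin.symm i : K))
    (fun i => hX _ (X.equivFin.symm i).2) (Subtype.val_injective.comp X.equivFin.symm.injective) hξ

lemma card_le_of_height_sub_lt (hS : 0 < S.totalArchWeight) {X : Finset K}
    (hX : ∀ x ∈ X, S.IsSolution x) (he : ∀ x ∈ X, x ^ 2 - x + 1 ≠ 0) {ξ : LogSpace ι}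
    (hξ : ξ ∈ sumZero ι)
    (hclose : ∀ x ∈ X, height (S.logVec x - ξ) < 0.0485 * S.totalArchWeight) : X.card ≤ 199 := by
  by_contra! hcard
  obtain ⟨Y, hYX, hY⟩ := Finset.exists_subset_card_eq (Nat.succ_le_of_lt hcard)
  obtain ⟨y, hy⟩ := Finset.card_pos.1 (by omega : 0 < Y.card)
  have hgap := card_choose_two_mul_height_le (fun x hx => hX x (hYX hx)) hξ
  have hsum := Finset.sum_le_card_nsmul Y _ _ fun x hx => (hclose x (hYX hx)).le
  rw [hY] at hgap hsum
  have hfact := mul_le_mul_of_nonneg_left log_factorial_two_hundred_le hS.le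
  have hlog := mul_le_mul_of_nonneg_left le_log_twentySeven_div_four hS.le
  have hlow := totalArchWeight_mul_log_le_height (hX y (hYX hy)) (he y (hYX hy))
  have hadd := height_add_le (S.logVec y - ξ) ξ
  rw [sub_add_cancel] at hadd
  generalize Real.log (Nat.factorial 200) = F at hgap hfact
  rw [Nat.choose_two_right, nsmul_eq_mul] at *
  norm_num at hgap hsum hlog
  linarith [hclose y (hYX hy)]

variable {V : Submodule ℝ (LogSpace ι)}

lemma card_le_of_height_le (hS : 0 < S.totalArchWeight) (hV : V ≤ sumZero ι) {X : Finset K}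
    (hX : ∀ x ∈ X, S.IsSolution x) (hXV : ∀ x ∈ X, S.logVec x ∈ V)
    (he : ∀ x ∈ X, x ^ 2 - x + 1 ≠ 0) (hsmall : ∀ x ∈ X, height (S.logVec x) ≤ S.totalArchWeight) :
    X.card ≤ 199 * 23 ^ Module.finrank ℝ V := by
  refine card_le_mul_pow_finrank hV hXV (ρ := 0.0485 * S.totalArchWeight) (by positivity) hS.le
    hsmall (by norm_num; linarith) fun ξ hξ => ?_
  have hsub := Finset.filter_subset
    (fun x => height (S.logVec x - ξ) < 0.0485 * S.totalArchWeight) X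
  exact card_le_of_height_sub_lt hS (fun x hx => hX x (hsub hx)) (fun x hx => he x (hsub hx))
    (hV hξ) fun x hx => (Finset.mem_filter.1 hx).2

/-- The logarithmic vector of `x` rescaled to height `1`. -/
noncomputable def direction (S : PlaceSystem K ι) (x : K) : LogSpace ι :=
  (height (S.logVec x))⁻¹ • S.logVec x

lemma height_smul_direction {x : K} (hx : 0 < height (S.logVec x)) :
    height (S.logVec x) • S.direction x = S.logVec x :=
  smul_inv_smul₀ hx.ne' _

lemma height_direction {x : K} (hx : 0 < height (S.logVec x)) : height (S.direction x) = 1 := by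
  rw [direction, height_smul (inv_nonneg.2 hx.le), inv_mul_cancel₀ hx.ne']

lemma height_logVec_sub_smul_le {x x' : K} {c ε : ℝ} (hx : 0 < height (S.logVec x))
    (hx' : 0 < height (S.logVec x')) (hc : 0 ≤ c)
    (hle : c * height (S.logVec x) ≤ height (S.logVec x'))
    (hε : height (S.direction x' - S.direction x) ≤ ε) :
    height (S.logVec x' - c • S.logVec x) ≤
      c * height (S.logVec x) * ε + (height (S.logVec x') - c * height (S.logVec x)) := by
  have hsplit : S.logVec x' - c • S.logVec x =
      (c * height (S.logVec x)) • (S.direction x' - S.direction x) +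
        (height (S.logVec x') - c * height (S.logVec x)) • S.direction x' := by
    rw [smul_sub, sub_smul, mul_smul c _ (S.direction x), height_smul_direction hx,
      height_smul_direction hx']
    abel
  have hnonneg : 0 ≤ c * height (S.logVec x) := by positivity
  rw [hsplit]
  refine (height_add_le _ _).trans ?_
  rw [height_smul hnonneg, height_smul (sub_nonneg.2 hle), height_direction hx', mul_one]
  gcongr

lemma mul_height_le_of_direction_near {x x' : K} (h : S.IsSolution x) (h' : S.IsSolution x')
    (hne : x ≠ x') (hS : 0 ≤ S.totalArchWeight) (hlarge : S.totalArchWeight < height (S.logVec x))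
    (hle : height (S.logVec x) ≤ height (S.logVec x'))
    (hnear : height (S.direction x' - S.direction x) ≤ 1 / 6) :
    1.14 * height (S.logVec x) ≤ height (S.logVec x') := by
  have hpos := hS.trans_lt hlarge
  have hdiff := height_logVec_sub_smul_le hpos (hpos.trans_le hle) zero_le_one
    ((one_mul _).trans_le hle) hnear
  rw [one_smul] at hdiff
  have hlog := mul_le_mul_of_nonneg_left Real.log_two_lt_d9.le hS
  norm_num at hlog ⊢
  linarith [height_logVec_le h h' hne]

lemma height_le_of_direction_near [CharZero K] {x x' : K} (h : S.IsSolution x)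
    (h' : S.IsSolution x') (hS : 0 < S.totalArchWeight)
    (hlarge : 25 * S.totalArchWeight ≤ height (S.logVec x))
    (hnear : height (S.direction x' - S.direction x) ≤ 1 / 6) :
    height (S.logVec x') ≤ 8 * height (S.logVec x) := by
  by_contra! hfar
  have hpos : 0 < height (S.logVec x) := by linarith
  have hpos' : 0 < height (S.logVec x') := by linarith
  set H := height (S.logVec x)
  set n := ⌊height (S.logVec x') / (2 * H)⌋₊
  have hn4 : (4 : ℝ) ≤ n := by
    have : 4 ≤ n := Nat.le_floor ((le_div_iff₀ (by positivity)).2 (by push_cast; linarith))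
    exact_mod_cast this
  have hnle : n * (2 * H) ≤ height (S.logVec x') :=
    (le_div_iff₀ (by positivity)).1 (Nat.floor_le (by positivity))
  have hltn : height (S.logVec x') < (n + 1) * (2 * H) :=
    (div_lt_iff₀ (by positivity)).1 (Nat.lt_floor_add_one _)
  have hdiff := height_logVec_sub_smul_le (c := 2 * n) hpos hpos' (by positivity)
    (by linarith) hnear
  have hpade := mul_height_logVec_le (n := n) (by exact_mod_cast (by linarith : (1 : ℝ) ≤ n)) h h'
  have hconst : S.totalArchWeight * (6 * n * Real.log 2) ≤ H / 25 * (6 * n * 0.6931471808) := by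
    have := Real.log_two_lt_d9.le
    gcongr
    linarith
  have hnH : 4 * H ≤ n * H := by gcongr
  norm_num at hconst
  linarith

lemma card_le_of_direction_near [CharZero K] (hS : 0 < S.totalArchWeight) {X : Finset K}
    (hX : ∀ x ∈ X, S.IsSolution x) (hlarge : ∀ x ∈ X, S.totalArchWeight < height (S.logVec x))
    (hnear : ∀ x ∈ X, ∀ x' ∈ X, height (S.direction x' - S.direction x) ≤ 1 / 6) :
    X.card ≤ 41 := by
  have hgap : ∀ x ∈ X, ∀ x' ∈ X, x ≠ x' → height (S.logVec x) ≤ height (S.logVec x') →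
      1.14 * height (S.logVec x) ≤ height (S.logVec x') := fun x hx x' hx' hne hle =>
    mul_height_le_of_direction_near (hX x hx) (hX x' hx') hne hS.le (hlarge x hx) hle
      (hnear x hx x' hx')
  have hmedium : (X.filter fun x => height (S.logVec x) ≤ 25 * S.totalArchWeight).card ≤ 25 := by
    refine card_le_of_forall_ne_of_lt_mul_pow (h := fun x => height (S.logVec x)) (q := 1.14)
      (a := S.totalArchWeight) (b := 25 * S.totalArchWeight) (by norm_num) hS.le ?_
      (fun x hx => (hlarge x (Finset.mem_of_mem_filter x hx)).le)
      (fun x hx => (Finset.mem_filter.1 hx).2)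
      fun x hx x' hx' => hgap x (Finset.mem_of_mem_filter x hx) x' (Finset.mem_of_mem_filter x' hx')
    rw [mul_comm]
    exact mul_lt_mul_of_pos_left (by norm_num) hS
  have hhuge : (X.filter fun x => ¬ height (S.logVec x) ≤ 25 * S.totalArchWeight).card ≤ 16 := by
    set Y := X.filter fun x => ¬ height (S.logVec x) ≤ 25 * S.totalArchWeight
    have hYX : Y ⊆ X := Finset.filter_subset _ _
    rcases Y.eq_empty_or_nonempty with hY | hY
    · simp [hY]
    obtain ⟨y, hy, hmin⟩ := Finset.exists_min_image Y (fun x => height (S.logVec x)) hY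
    refine card_le_of_forall_ne_of_lt_mul_pow (h := fun x => height (S.logVec x)) (q := 1.14)
      (a := height (S.logVec y)) (b := 8 * height (S.logVec y)) (by norm_num) (height_nonneg _) ?_
      hmin (fun x hx => ?_) (fun x hx x' hx' => hgap x (hYX hx) x' (hYX hx'))
    · rw [mul_comm]
      exact mul_lt_mul_of_pos_left (by norm_num) (hS.trans (hlarge y (hYX hy)))
    · exact height_le_of_direction_near (hX y (hYX hy)) (hX x (hYX hx)) hS
        (not_le.1 (Finset.mem_filter.1 hy).2).le (hnear y (hYX hy) x (hYX hx))
  rw [← Finset.card_filter_add_card_filter_not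
    (fun x => height (S.logVec x) ≤ 25 * S.totalArchWeight)]
  omega

lemma card_le_of_lt_height [CharZero K] (hS : 0 < S.totalArchWeight) (hV : V ≤ sumZero ι)
    {X : Finset K} (hX : ∀ x ∈ X, S.IsSolution x) (hXV : ∀ x ∈ X, S.logVec x ∈ V)
    (hlarge : ∀ x ∈ X, S.totalArchWeight < height (S.logVec x)) :
    X.card ≤ 41 * 20 ^ Module.finrank ℝ V := by
  refine card_le_mul_pow_finrank hV (P := S.direction) (fun x hx => V.smul_mem _ (hXV x hx))
    (ρ := 1 / 18) (by norm_num) zero_le_one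
    (fun x hx => (height_direction (hS.trans (hlarge x hx))).le) (by norm_num) fun ξ hξ => ?_
  have hsub := Finset.filter_subset (fun x => height (S.direction x - ξ) < 1 / 18) X
  refine card_le_of_direction_near hS (fun x hx => hX x (hsub hx))
    (fun x hx => hlarge x (hsub hx)) fun x hx x' hx' => ?_
  have hneg := height_neg_le (hV (V.sub_mem (V.smul_mem (height (S.logVec x))⁻¹
    (hXV x (hsub hx))) hξ))
  have hadd := height_add_le (S.direction x' - ξ) (-(S.direction x - ξ))
  rw [← sub_eq_add_neg, sub_sub_sub_cancel_right] at hadd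
  rw [← direction] at hneg
  linarith [(Finset.mem_filter.1 hx).2, (Finset.mem_filter.1 hx').2]

theorem card_isSolution_le [CharZero K] (hS : 0 < S.totalArchWeight) (hV : V ≤ sumZero ι)
    {X : Finset K} (hX : ∀ x ∈ X, S.IsSolution x) (hXV : ∀ x ∈ X, S.logVec x ∈ V) :
    X.card ≤ 2 + 199 * 23 ^ Module.finrank ℝ V + 41 * 20 ^ Module.finrank ℝ V := by
  set Y := X.filter fun x => ¬ x ^ 2 - x + 1 = 0
  have hYX : Y ⊆ X := Finset.filter_subset _ _
  have hexc := card_filter_sq_sub_add_one_eq_zero_le X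
  have hsmall := card_le_of_height_le hS hV
    (X := Y.filter fun x => height (S.logVec x) ≤ S.totalArchWeight)
    (fun x hx => hX x (hYX (Finset.mem_of_mem_filter x hx)))
    (fun x hx => hXV x (hYX (Finset.mem_of_mem_filter x hx)))
    (fun x hx => (Finset.mem_filter.1 (Finset.mem_of_mem_filter x hx)).2)
    (fun x hx => (Finset.mem_filter.1 hx).2)
  have hlarge := card_le_of_lt_height hS hV
    (X := Y.filter fun x => ¬ height (S.logVec x) ≤ S.totalArchWeight)
    (fun x hx => hX x (hYX (Finset.mem_of_mem_filter x hx)))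
    (fun x hx => hXV x (hYX (Finset.mem_of_mem_filter x hx)))
    (fun x hx => not_le.1 (Finset.mem_filter.1 hx).2)
  rw [← Finset.card_filter_add_card_filter_not (s := X) (fun x => x ^ 2 - x + 1 = 0),
    ← Finset.card_filter_add_card_filter_not (s := Y)
      (fun x => height (S.logVec x) ≤ S.totalArchWeight)]
  omega

end PlaceSystem

/-! ### Number fields -/

namespace LogSpace

variable {ι : Type*} [Fintype ι]

lemma finrank_add_two_le {W : Submodule ℝ (LogSpace ι)} (hW : W ≤ sumZero ι) {J : Finset ι}
    (hJ : J.Nonempty) (hsupp : ∀ ξ ∈ W, ∀ i ∉ J, ξ i = 0) :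
    Module.finrank ℝ W + 2 ≤ 2 * J.card := by
  obtain ⟨j, hj⟩ := hJ
  let restrict : W →ₗ[ℝ] (J.erase j → ℝ × ℝ) :=
    (LinearMap.funLeft ℝ (ℝ × ℝ) Subtype.val).comp W.subtype
  have hinj : Function.Injective restrict := by
    refine (injective_iff_map_eq_zero restrict).2 fun ξ hξ => ?_
    have hoff : ∀ i ≠ j, ξ.1 i = 0 := fun i hi => by
      by_cases hiJ : i ∈ J
      · exact congrFun hξ ⟨i, Finset.mem_erase.2 ⟨hi, hiJ⟩⟩
      · exact hsupp ξ ξ.2 i hiJ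
    have hj₀ : ξ.1 j = 0 := by
      rw [← Fintype.sum_eq_single j hoff, mem_sumZero.1 (hW ξ.2)]
    ext1
    funext i
    by_cases hi : i = j
    · exact hi ▸ hj₀
    · exact hoff i hi
  have hle := LinearMap.finrank_le_finrank_of_injective hinj
  have hdim : Module.finrank ℝ (J.erase j → ℝ × ℝ) = (J.card - 1) * 2 := by
    simp [Module.finrank_pi_fintype, Finset.card_erase_of_mem hj]
  have := Finset.card_pos.2 ⟨j, hj⟩
  omega

lemma finrank_span_add_one_le {A : Set (LogSpace ι)} (hA : A ⊆ sumZero ι) {J : Finset ι}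
    (hJ : J.Nonempty) {ξ₀ : LogSpace ι} (hξ₀ : ξ₀ ∈ A) (hoff : ∀ ξ ∈ A, ∀ i ∉ J, ξ i = ξ₀ i) :
    Module.finrank ℝ (Submodule.span ℝ A) + 1 ≤ 2 * J.card := by
  let W := Submodule.span ℝ ((fun ξ => ξ - ξ₀) '' A)
  have hW : W ≤ sumZero ι := Submodule.span_le.2 <| by
    rintro _ ⟨ξ, hξ, rfl⟩
    exact (sumZero ι).sub_mem (hA hξ) (hA hξ₀)
  have hsupp : ∀ ξ ∈ W, ∀ i ∉ J, ξ i = 0 := fun ξ hξ i hi => by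
    have hle : W ≤ LinearMap.ker (LinearMap.proj i) := Submodule.span_le.2 <| by
      rintro _ ⟨η, hη, rfl⟩
      simp [hoff η hη i hi]
    exact hle hξ
  have hle : Submodule.span ℝ A ≤ Submodule.span ℝ {ξ₀} ⊔ W := by
    refine Submodule.span_le.2 fun ξ hξ => ?_
    rw [← add_sub_cancel ξ₀ ξ]
    exact Submodule.add_mem_sup (Submodule.mem_span_singleton_self _)
      (Submodule.subset_span ⟨ξ, hξ, rfl⟩)
  have hsup := (Submodule.finrank_mono hle).trans
    (Submodule.finrank_add_le_finrank_add_finrank _ _)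
  have hline : Module.finrank ℝ (Submodule.span ℝ {ξ₀}) ≤ 1 := by
    simpa using finrank_span_le_card (R := ℝ) ({ξ₀} : Set (LogSpace ι))
  have := finrank_add_two_le hW hJ hsupp
  omega

end LogSpace

section NumberField

variable {K : Type*} [Field K] [NumberField K]

lemma adicAbv_le_one_iff (v : HeightOneSpectrum (𝓞 K)) (x : K) :
    NumberField.HeightOneSpectrum.adicAbv K v x ≤ 1 ↔ v.valuation K x ≤ 1 := by
  have hmono := WithZeroMulInt.toNNReal_strictMono
    (NumberField.HeightOneSpectrum.one_lt_absNorm_nnreal v)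
  rw [NumberField.HeightOneSpectrum.adicAbv_def, ← hmono.le_iff_le (b := 1), map_one]
  norm_cast

lemma finite_setOf_valuation_ne_one {x : K} (hx : x ≠ 0) :
    {v : HeightOneSpectrum (𝓞 K) | v.valuation K x ≠ 1}.Finite := by
  refine ((HeightOneSpectrum.Support.finite (𝓞 K) x).union
    (HeightOneSpectrum.Support.finite (𝓞 K) x⁻¹)).subset fun v hv => ?_
  rcases (Ne.lt_or_gt hv : v.valuation K x < 1 ∨ 1 < v.valuation K x) with hlt | hgt
  · refine Or.inr ?_
    change 1 < v.valuation K x⁻¹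
    rwa [map_inv₀, one_lt_inv₀ (zero_lt_iff.2 ((v.valuation K).ne_zero_iff.2 hx))]
  · exact Or.inl hgt

lemma finprod_finitePlace_le_prod (T : Finset (HeightOneSpectrum (𝓞 K))) {x : K} (hx : x ≠ 0)
    (h : ∀ v ∉ T, v.valuation K x ≤ 1) :
    ∏ᶠ w : FinitePlace K, w x ≤ ∏ v ∈ T, NumberField.HeightOneSpectrum.adicAbv K v x := by
  set f : HeightOneSpectrum (𝓞 K) → ℝ := fun v => NumberField.HeightOneSpectrum.adicAbv K v x
  have hf : ∏ᶠ w : FinitePlace K, w x = ∏ᶠ v, f v := by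
    rw [← finprod_comp_equiv (FinitePlace.equivHeightOneSpectrum (K := K)).symm]
    exact finprod_congr fun v => by
      rw [FinitePlace.equivHeightOneSpectrum_symm_apply, FinitePlace.norm_embedding]
  have hsupp : Function.mulSupport f ⊆ ↑((finite_setOf_valuation_ne_one hx).toFinset ∪ T) := by
    intro v hv
    simp only [Finset.coe_union, Set.Finite.coe_toFinset]
    refine Or.inl fun hval => hv ?_
    simp [f, NumberField.HeightOneSpectrum.adicAbv_def, hval]
  have hnonneg : ∀ v, 0 ≤ f v := fun v => apply_nonneg _ _
  rw [hf, finprod_eq_prod_of_mulSupport_subset f hsupp, ← Finset.sdiff_union_self_eq_union,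
    Finset.prod_union Finset.sdiff_disjoint]
  exact mul_le_of_le_one_left (Finset.prod_nonneg fun v _ => hnonneg v)
    (Finset.prod_le_one (fun v _ => hnonneg v) fun v hv =>
      (adicAbv_le_one_iff v x).2 (h v (Finset.mem_sdiff.1 hv).2))

lemma sum_mult_mul_log_add_sum_log_adicAbv_nonneg (T : Finset (HeightOneSpectrum (𝓞 K))) {x : K}
    (hx : x ≠ 0) (h : ∀ v ∉ T, v.valuation K x ≤ 1) :
    0 ≤ ∑ w : InfinitePlace K, (w.mult : ℝ) * Real.log (w x) +
      ∑ v ∈ T, Real.log (NumberField.HeightOneSpectrum.adicAbv K v x) := by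
  have hinf : ∀ w : InfinitePlace K, 0 < w x ^ w.mult := fun w => pow_pos (w.pos_iff.2 hx) _
  have hfin : ∀ v ∈ T, NumberField.HeightOneSpectrum.adicAbv K v x ≠ 0 :=
    fun v _ => ((NumberField.HeightOneSpectrum.adicAbv K v).pos hx).ne'
  have hprod : 1 ≤ (∏ w : InfinitePlace K, w x ^ w.mult) *
      ∏ v ∈ T, NumberField.HeightOneSpectrum.adicAbv K v x := by
    rw [← NumberField.prod_abs_eq_one hx]
    exact mul_le_mul_of_nonneg_left (finprod_finitePlace_le_prod T hx h)
      (Finset.prod_nonneg fun w _ => (hinf w).le)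
  have hlog := Real.log_nonneg hprod
  rw [Real.log_mul (Finset.prod_ne_zero_iff.2 fun w _ => (hinf w).ne')
    (Finset.prod_ne_zero_iff.2 hfin), Real.log_prod fun w _ => (hinf w).ne',
    Real.log_prod hfin] at hlog
  simpa only [Real.log_pow] using hlog

/-- The system formed by the archimedean places of a number field and a finite set `T` of finite
places; its integers are the `T`-integers. -/
noncomputable def PlaceSystem.ofFinset (T : Finset (HeightOneSpectrum (𝓞 K))) :
    PlaceSystem K (InfinitePlace K ⊕ T) where
  abv := Sum.elim (fun w => w.1) fun v => NumberField.HeightOneSpectrum.adicAbv K v.1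
  weight := Sum.elim (fun w => w.mult) fun _ => 1
  archWeight := Sum.elim (fun w => w.mult) fun _ => 0
  weight_pos := by
    rintro (w | _)
    · simpa using w.mult_pos
    · simp
  nonarch_or_arch := by
    rintro (w | v)
    · exact Or.inr ⟨rfl, w.embedding, fun x => (w.norm_embedding_eq x).symm⟩
    · exact Or.inl ⟨rfl, NumberField.HeightOneSpectrum.isNonarchimedean_adicAbv K v.1⟩
  integers := ((T : Set (HeightOneSpectrum (𝓞 K))).integer K).toSubring
  sum_log_nonneg x hx hx₀ := by
    rw [Fintype.sum_sum_type]
    simp only [Sum.elim_inl, Sum.elim_inr, one_mul]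
    rw [Finset.sum_coe_sort T fun v => Real.log (NumberField.HeightOneSpectrum.adicAbv K v x)]
    exact sum_mult_mul_log_add_sum_log_adicAbv_nonneg T hx₀ hx

namespace PlaceSystem

lemma totalArchWeight_ofFinset_pos (T : Finset (HeightOneSpectrum (𝓞 K))) :
    0 < (ofFinset T).totalArchWeight := by
  unfold totalArchWeight
  rw [Fintype.sum_sum_type]
  simp only [ofFinset, Sum.elim_inl, Sum.elim_inr, Finset.sum_const_zero, add_zero]
  exact Finset.sum_pos (fun w _ => by exact_mod_cast w.mult_pos) Finset.univ_nonempty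

lemma isSolution_ofFinset {T : Finset (HeightOneSpectrum (𝓞 K))} {x : K} (hx : x ≠ 0)
    (hx' : 1 - x ≠ 0) (h : ∀ v ∉ T, v.valuation K x = 1)
    (h' : ∀ v ∉ T, v.valuation K (1 - x) = 1) : (ofFinset T).IsSolution x where
  ne_zero := hx
  one_sub_ne_zero := hx'
  mem v hv := (h v hv).le
  inv_mem v hv := by rw [map_inv₀, h v hv, inv_one]
  one_sub_inv_mem v hv := by rw [map_inv₀, h' v hv, inv_one]

lemma logVec_ofFinset_congr {T : Finset (HeightOneSpectrum (𝓞 K))} {v : T} {x y : K}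
    (h : v.1.valuation K x = v.1.valuation K y)
    (h' : v.1.valuation K (1 - x) = v.1.valuation K (1 - y)) :
    (ofFinset T).logVec x (Sum.inr v) = (ofFinset T).logVec y (Sum.inr v) := by
  simp only [logVec, logAbv, ofFinset, Sum.elim_inr, NumberField.HeightOneSpectrum.adicAbv_def,
    h, h']

end PlaceSystem

-- The solutions are units outside the larger set of places where the orders of `x₀` and `1 - x₀`
-- do not both vanish, but there the logarithmic vectors of all of them agree: only `T` and the
-- archimedean places contribute to the dimension of their span.
theorem card_le_of_forall_valuation_eq (T : Finset (HeightOneSpectrum (𝓞 K))) {X : Finset K}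
    (h₀ : ∀ x ∈ X, x ≠ 0) (h₁ : ∀ x ∈ X, 1 - x ≠ 0)
    (hX : ∀ v ∉ T, ∀ x ∈ X, ∀ y ∈ X, v.valuation K x = v.valuation K y)
    (hX' : ∀ v ∉ T, ∀ x ∈ X, ∀ y ∈ X, v.valuation K (1 - x) = v.valuation K (1 - y)) :
    X.card ≤ 3 * 7 ^ (4 * sCard K T) := by
  rcases X.eq_empty_or_nonempty with rfl | ⟨x₀, hx₀⟩
  · simp
  let T' := T ∪ ((finite_setOf_valuation_ne_one (h₀ x₀ hx₀)).toFinset ∪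
    (finite_setOf_valuation_ne_one (h₁ x₀ hx₀)).toFinset)
  have hunit : ∀ v ∉ T', v ∉ T ∧ v.valuation K x₀ = 1 ∧ v.valuation K (1 - x₀) = 1 :=
    fun v hv => by simpa [T', not_or] using hv
  let S := PlaceSystem.ofFinset T'
  have hsol : ∀ x ∈ X, S.IsSolution x := fun x hx =>
    PlaceSystem.isSolution_ofFinset (h₀ x hx) (h₁ x hx)
      (fun v hv => (hX v (hunit v hv).1 x hx x₀ hx₀).trans (hunit v hv).2.1)
      (fun v hv => (hX' v (hunit v hv).1 x hx x₀ hx₀).trans (hunit v hv).2.2)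
  let J : Finset (InfinitePlace K ⊕ T') := Finset.univ.disjSum ({v | v.1 ∈ T} : Finset T')
  have hJ : J.card ≤ sCard K T := by
    have : ({v | v.1 ∈ T} : Finset T').card ≤ T.card :=
      Finset.card_le_card_of_injOn Subtype.val (fun v hv => (Finset.mem_filter.1 hv).2)
        Subtype.val_injective.injOn
    rw [Finset.card_disjSum, Finset.card_univ, sCard]
    omega
  have hmem : S.logVec '' X ⊆ sumZero (InfinitePlace K ⊕ T') := by
    rintro _ ⟨x, hx, rfl⟩
    exact (hsol x hx).logVec_mem_sumZero
  have hoff : ∀ ξ ∈ S.logVec '' X, ∀ i ∉ J, ξ i = S.logVec x₀ i := by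
    rintro _ ⟨x, hx, rfl⟩ (w | v) hv
    · simp [J] at hv
    · have hvT : v.1 ∉ T := by simpa [J] using hv
      exact PlaceSystem.logVec_ofFinset_congr (hX v hvT x hx x₀ hx₀) (hX' v hvT x hx x₀ hx₀)
  have hrank := finrank_span_add_one_le hmem (J := J)
    ⟨_, Finset.inl_mem_disjSum.2 (Finset.mem_univ (Classical.arbitrary _))⟩ ⟨x₀, hx₀, rfl⟩ hoff
  exact (PlaceSystem.card_isSolution_le (PlaceSystem.totalArchWeight_ofFinset_pos T')
    (Submodule.span_le.2 hmem) hsol fun x hx => Submodule.subset_span ⟨x, hx, rfl⟩).trans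
    (two_add_add_le_three_mul_seven_pow (hrank.trans (Nat.mul_le_mul_left 2 hJ)))

end NumberField

/-! ### Good reduction and the separation of points modulo a prime -/

section PlaneVectors

variable {A B : Type*} [CommRing A] [CommRing B]

/-- The determinant of two plane vectors, which vanishes when they represent the same point of the
projective line. -/
def wedge (p q : Fin 2 → A) : A :=
  p 0 * q 1 - p 1 * q 0

lemma wedge_self (p : Fin 2 → A) : wedge p p = 0 := by
  rw [wedge, mul_comm, sub_self]

lemma wedge_comm (p q : Fin 2 → A) : wedge p q = -wedge q p := by
  rw [wedge, wedge]; ring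

lemma wedge_smul_left (c : A) (p q : Fin 2 → A) : wedge (c • p) q = c * wedge p q := by
  simp only [wedge, Pi.smul_apply, smul_eq_mul]; ring

lemma wedge_smul_right (c : A) (p q : Fin 2 → A) : wedge p (c • q) = c * wedge p q := by
  simp only [wedge, Pi.smul_apply, smul_eq_mul]; ring

lemma wedge_map (f : A →+* B) (p q : Fin 2 → A) : wedge (f ∘ p) (f ∘ q) = f (wedge p q) := by
  simp only [wedge, Function.comp_apply, map_sub, map_mul]

lemma map_comp_smul (f : A →+* B) (c : A) (p : Fin 2 → A) : f ∘ (c • p) = f c • (f ∘ p) :=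
  funext fun _ => map_mul f _ _

lemma wedge_add_smul_add_smul (p p' : Fin 2 → A) (s t : A) :
    wedge (p + s • p') (p + t • p') = (t - s) * wedge p p' := by
  simp only [wedge, Pi.add_apply, Pi.smul_apply, smul_eq_mul]; ring

/-- A plane vector has a unit coordinate. Over a local ring this means that it is primitive, i.e.
that it represents a point of the projective line over the ring. -/
def HasUnitCoord (p : Fin 2 → A) : Prop :=
  ∃ i, IsUnit (p i)

lemma hasUnitCoord_iff_ne_zero {K : Type*} [Field K] {w : Fin 2 → K} :
    HasUnitCoord w ↔ w ≠ 0 := by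
  simp only [HasUnitCoord, isUnit_iff_ne_zero, Function.ne_iff, Pi.zero_apply]

namespace HasUnitCoord

lemma map {p : Fin 2 → A} (hp : HasUnitCoord p) (f : A →+* B) : HasUnitCoord (f ∘ p) :=
  hp.imp fun _ hi => hi.map f

lemma isUnit_of_smul {c : A} {p : Fin 2 → A} (hp : HasUnitCoord (c • p)) : IsUnit c :=
  hp.elim fun _ hi => isUnit_of_mul_isUnit_left hi

lemma exists_eq_smul {p q : Fin 2 → A} (hp : HasUnitCoord p) (h : wedge p q = 0) :
    ∃ c : A, q = c • p := by
  obtain ⟨i, hi⟩ := hp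
  obtain ⟨v, hv⟩ := hi.exists_right_inv
  refine ⟨q i * v, funext fun j => ?_⟩
  simp only [wedge] at h
  simp only [Pi.smul_apply, smul_eq_mul]
  fin_cases i <;> fin_cases j <;> simp only [Fin.zero_eta, Fin.mk_one] at hv ⊢
  · linear_combination -q 0 * hv
  · linear_combination v * h - q 1 * hv
  · linear_combination -v * h - q 0 * hv
  · linear_combination -q 1 * hv

lemma exists_eq_units_smul {p q : Fin 2 → A} (hp : HasUnitCoord p) (hq : HasUnitCoord q)
    (h : wedge p q = 0) : ∃ c : Aˣ, q = (c : A) • p := by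
  obtain ⟨c, rfl⟩ := hp.exists_eq_smul h
  exact ⟨hq.isUnit_of_smul.unit, rfl⟩

lemma exists_wedge_eq_one {p : Fin 2 → A} (hp : HasUnitCoord p) :
    ∃ p' : Fin 2 → A, wedge p p' = 1 := by
  obtain ⟨i, hi⟩ := hp
  obtain ⟨v, hv⟩ := hi.exists_right_inv
  fin_cases i <;> simp only [Fin.zero_eta, Fin.mk_one] at hv
  · exact ⟨![0, v], by simp [wedge, hv]⟩
  · exact ⟨![-v, 0], by simp [wedge, hv]⟩

end HasUnitCoord

lemma eq_wedge_smul_add_wedge_smul {p p' : Fin 2 → A} (h : wedge p p' = 1) (q : Fin 2 → A) :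
    q = wedge q p' • p + wedge p q • p' := by
  simp only [wedge] at h
  funext i
  simp only [wedge, Pi.add_apply, Pi.smul_apply, smul_eq_mul]
  fin_cases i <;> simp only [Fin.zero_eta, Fin.mk_one]
  · linear_combination -q 0 * h
  · linear_combination -q 1 * h

lemma HasUnitCoord.exists_eq_units_smul_add_smul [IsLocalRing A] {p p' q : Fin 2 → A}
    (h : wedge p p' = 1) (hq : HasUnitCoord q) (hpq : ¬ IsUnit (wedge p q)) :
    ∃ (γ : Aˣ) (s : A), ¬ IsUnit s ∧ q = (γ : A) • (p + s • p') := by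
  have hγ : IsUnit (wedge q p') := by
    by_contra hγ
    obtain ⟨i, hi⟩ := hq
    rw [eq_wedge_smul_add_wedge_smul h q] at hi
    exact (Ideal.add_mem (IsLocalRing.maximalIdeal A) (Ideal.mul_mem_right (p i) _ hγ)
      (Ideal.mul_mem_right (p' i) _ hpq)) hi
  obtain ⟨γ, hγ⟩ := hγ
  refine ⟨γ, γ⁻¹ * wedge p q, by simpa using hpq, ?_⟩
  rw [smul_add, smul_smul, Units.mul_inv_cancel_left, hγ]
  exact eq_wedge_smul_add_wedge_smul h q

end PlaneVectors

section HomogeneousCoordinates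

variable {K : Type*} [Field K]

/-- `w` is a vector of homogeneous coordinates of the point `P` of the projective line. -/
def IsCoord (w : Fin 2 → K) (P : Projectivization K (Fin 2 → K)) : Prop :=
  ∃ h : w ≠ 0, P = Projectivization.mk K w h

lemma isCoord_rep (P : Projectivization K (Fin 2 → K)) : IsCoord P.rep P :=
  ⟨P.rep_nonzero, P.mk_rep.symm⟩

namespace IsCoord

variable {w w' : Fin 2 → K} {P Q : Projectivization K (Fin 2 → K)}

lemma hasUnitCoord (h : IsCoord w P) : HasUnitCoord w :=
  hasUnitCoord_iff_ne_zero.2 h.1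

lemma smul (h : IsCoord w P) {c : K} (hc : c ≠ 0) : IsCoord (c • w) P := by
  obtain ⟨hw, rfl⟩ := h
  exact ⟨smul_ne_zero hc hw,
    ((Projectivization.mk_eq_mk_iff' K _ _ (smul_ne_zero hc hw) hw).2 ⟨c, rfl⟩).symm⟩

lemma ne_zero_of_smul {c : K} (h : IsCoord (c • w) P) : c ≠ 0 :=
  (smul_ne_zero_iff.1 h.1).1

lemma of_smul {c : K} (h : IsCoord (c • w) P) : IsCoord w P := by
  simpa only [smul_smul, inv_mul_cancel₀ h.ne_zero_of_smul, one_smul] using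
    h.smul (inv_ne_zero h.ne_zero_of_smul)

lemma exists_eq_smul (h : IsCoord w P) (h' : IsCoord w' P) : ∃ c : K, c ≠ 0 ∧ w' = c • w := by
  obtain ⟨hw, rfl⟩ := h
  obtain ⟨hw', h⟩ := h'
  obtain ⟨c, rfl⟩ := (Projectivization.mk_eq_mk_iff' K _ _ hw' hw).1 h.symm
  exact ⟨c, (smul_ne_zero_iff.1 hw').1, rfl⟩

lemma wedge_eq_zero_iff (h : IsCoord w P) (h' : IsCoord w' Q) : wedge w w' = 0 ↔ P = Q := by
  constructor
  · intro hw
    obtain ⟨c, rfl⟩ := h.hasUnitCoord.exists_eq_smul hw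
    obtain ⟨_, rfl⟩ := h
    obtain ⟨_, rfl⟩ := h'.of_smul
    rfl
  · rintro rfl
    obtain ⟨c, -, rfl⟩ := h.exists_eq_smul h'
    rw [wedge_smul_right, wedge_self, mul_zero]

end IsCoord

section Integral

variable {O : Type*} [CommRing O] [Algebra O K] [IsFractionRing O K]

lemma exists_hasUnitCoord_isCoord [IsDomain O] [ValuationRing O]
    (P : Projectivization K (Fin 2 → K)) :
    ∃ p : Fin 2 → O, HasUnitCoord p ∧ IsCoord (algebraMap O K ∘ p) P := by
  let ν := ValuationRing.valuation O K
  obtain ⟨i, hi⟩ := Finite.exists_max fun j => ν (P.rep j)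
  have hne : P.rep i ≠ 0 := fun h => P.rep_nonzero <| funext fun j => by
    simpa [h, ν] using hi j
  have hint : ∀ j, ∃ a : O, algebraMap O K a = (P.rep i)⁻¹ * P.rep j := fun j => by
    rw [← ValuationRing.mem_integer_iff, Valuation.mem_integer_iff, map_mul, map_inv₀, mul_comm,
      ← div_eq_mul_inv]
    exact div_le_one_of_le₀ (hi j) zero_le
  choose p hp using hint
  have hpi : p i = 1 := IsFractionRing.injective O K (by
    rw [hp, inv_mul_cancel₀ hne, map_one])
  refine ⟨p, ⟨i, hpi ▸ isUnit_one⟩, ?_⟩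
  have : algebraMap O K ∘ p = (P.rep i)⁻¹ • P.rep := funext hp
  exact this ▸ (isCoord_rep P).smul (inv_ne_zero hne)

lemma IsCoord.algebraMap_wedge_eq_zero_iff {p q : Fin 2 → O}
    {P Q : Projectivization K (Fin 2 → K)} (h : IsCoord (algebraMap O K ∘ p) P)
    (h' : IsCoord (algebraMap O K ∘ q) Q) : wedge p q = 0 ↔ P = Q := by
  rw [← h.wedge_eq_zero_iff h', wedge_map, map_eq_zero_iff _ (IsFractionRing.injective O K)]

/-- `P` and `Q` have distinct reductions modulo the maximal ideal of the local ring `O` with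
fraction field `K`. -/
def DistinctMod (O : Type*) [CommRing O] [Algebra O K] (P Q : Projectivization K (Fin 2 → K)) :
    Prop :=
  ∃ p q : Fin 2 → O, IsCoord (algebraMap O K ∘ p) P ∧ IsCoord (algebraMap O K ∘ q) Q ∧
    IsUnit (wedge p q)

end Integral

end HomogeneousCoordinates

section Forms

variable {O : Type*} [CommRing O]

/-- The polynomial self-map of the plane over an `O`-algebra defined by a pair of forms `Φ`. Over
the polynomial ring it is the substitution of pairs of forms into `Φ`. -/
noncomputable def formMap {A : Type*} [CommRing A] [Algebra O A]
    (Φ : Fin 2 → MvPolynomial (Fin 2) O) (w : Fin 2 → A) : Fin 2 → A :=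
  fun i => aeval w (Φ i)

variable {A B : Type*} [CommRing A] [Algebra O A] [CommRing B] [Algebra O B]

lemma formMap_X (w : Fin 2 → A) : formMap (X : Fin 2 → MvPolynomial (Fin 2) O) w = w :=
  funext fun i => aeval_X w i

lemma formMap_map (Φ : Fin 2 → MvPolynomial (Fin 2) O) (f : A →ₐ[O] B) (w : Fin 2 → A) :
    formMap Φ (f ∘ w) = f ∘ formMap Φ w :=
  funext fun i => (MvPolynomial.comp_aeval_apply w f (Φ i)).symm

lemma formMap_formMap (Φ Ψ : Fin 2 → MvPolynomial (Fin 2) O) (w : Fin 2 → A) :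
    formMap (formMap Φ Ψ) w = formMap Φ (formMap Ψ w) :=
  (formMap_map Φ (aeval w) Ψ).symm

lemma aeval_smul_of_isHomogeneous {σ : Type*} {p : MvPolynomial σ O} {e : ℕ}
    (hp : p.IsHomogeneous e) (c : A) (w : σ → A) : aeval (c • w) p = c ^ e * aeval w p := by
  simp only [aeval_def, eval₂_eq, Finset.mul_sum]
  refine Finset.sum_congr rfl fun m hm => ?_
  simp only [Pi.smul_apply, smul_eq_mul, mul_pow, Finset.prod_mul_distrib,
    Finset.prod_pow_eq_pow_sum, hp.degree_eq_sum_deg_support hm]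
  ring

lemma formMap_smul {Φ : Fin 2 → MvPolynomial (Fin 2) O} {e : ℕ}
    (hΦ : ∀ i, (Φ i).IsHomogeneous e) (c : A) (w : Fin 2 → A) :
    formMap Φ (c • w) = c ^ e • formMap Φ w :=
  funext fun i => aeval_smul_of_isHomogeneous (hΦ i) c w

lemma hasUnitCoord_formMap_of_isLocalHom {Ω : Type*} [Field Ω]
    {Φ : Fin 2 → MvPolynomial (Fin 2) O} (ρ : O →+* Ω) [IsLocalHom ρ]
    (hρ : ∀ w : Fin 2 → Ω, (∀ i, eval w (MvPolynomial.map ρ (Φ i)) = 0) → w = 0)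
    {p : Fin 2 → O} (hp : HasUnitCoord p) : HasUnitCoord (formMap Φ p) := by
  by_contra hcon
  refine hasUnitCoord_iff_ne_zero.1 (hp.map ρ) (hρ _ fun i => ?_)
  rw [eval_map, ← MvPolynomial.eval₂_comp]
  by_contra hi
  exact hcon ⟨i, (isUnit_iff_ne_zero.2 hi).of_map⟩

lemma not_isUnit_wedge_formMap [IsLocalRing O] {Φ : Fin 2 → MvPolynomial (Fin 2) O} {e : ℕ}
    (hΦ : ∀ i, (Φ i).IsHomogeneous e) {p q : Fin 2 → O} (hp : HasUnitCoord p)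
    (h : ¬ IsUnit (wedge p q)) : ¬ IsUnit (wedge (formMap Φ p) (formMap Φ q)) := by
  let ρ := Algebra.ofId O (IsLocalRing.ResidueField O)
  have hρ : ∀ x, ρ x = 0 ↔ ¬ IsUnit x := IsLocalRing.residue_eq_zero_iff
  have hw : wedge (ρ ∘ p) (ρ ∘ q) = 0 := (wedge_map ρ.toRingHom p q).trans ((hρ _).2 h)
  obtain ⟨c, hc⟩ : ∃ c, ρ ∘ q = c • (ρ ∘ p) := (hp.map ρ.toRingHom).exists_eq_smul hw
  rw [← hρ]
  calc ρ (wedge (formMap Φ p) (formMap Φ q))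
      = wedge (formMap Φ (ρ ∘ p)) (formMap Φ (ρ ∘ q)) := by
        rw [formMap_map, formMap_map]
        exact (wedge_map ρ.toRingHom _ _).symm
    _ = wedge (formMap Φ (ρ ∘ p)) (c ^ e • formMap Φ (ρ ∘ p)) := by
        rw [← formMap_smul hΦ, ← hc]
    _ = 0 := by rw [wedge_smul_right, wedge_self, mul_zero]

end Forms

section GoodModels

variable {O : Type*} [CommRing O] {K : Type*} [Field K] [Algebra O K]
  {f g : Projectivization K (Fin 2 → K) → Projectivization K (Fin 2 → K)}
  {Φ Ψ : Fin 2 → MvPolynomial (Fin 2) O} {e e' : ℕ} {P Q R : Projectivization K (Fin 2 → K)}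

/-- The pair `Φ` of forms of degree `e` over `O` induces the self-map `f` of the projective line
over `K`, and its reduction has no common zero. Over a valuation ring `O` with fraction field `K`
this expresses that `f` has good reduction. -/
structure IsGoodModel (Φ : Fin 2 → MvPolynomial (Fin 2) O) (e : ℕ)
    (f : Projectivization K (Fin 2 → K) → Projectivization K (Fin 2 → K)) : Prop where
  isHomogeneous : ∀ i, (Φ i).IsHomogeneous e
  hasUnitCoord : ∀ {p : Fin 2 → O}, HasUnitCoord p → HasUnitCoord (formMap Φ p)
  isCoord : ∀ {w : Fin 2 → K} {P : Projectivization K (Fin 2 → K)},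
    IsCoord w P → IsCoord (formMap Φ w) (f P)

/-- `Φ` is ramified at `P`. A tangent vector at `P` is a point over the dual numbers above `P`; it
is zero when it comes from a point over `K`. Ramification means that `Φ` kills all of them. -/
def IsRamifiedAt (Φ : Fin 2 → MvPolynomial (Fin 2) O) (P : Projectivization K (Fin 2 → K)) : Prop :=
  ∀ u : Fin 2 → DualNumber K, IsCoord (TrivSqZeroExt.fst ∘ u) P →
    ∃ (c : DualNumber K) (s : Fin 2 → K), formMap Φ u = c • (algebraMap K (DualNumber K) ∘ s)

lemma fst_comp_formMap (Φ : Fin 2 → MvPolynomial (Fin 2) O) (u : Fin 2 → DualNumber K) :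
    TrivSqZeroExt.fst ∘ formMap Φ u = formMap Φ (TrivSqZeroExt.fst ∘ u) :=
  (formMap_map Φ (TrivSqZeroExt.fstHom O K K) u).symm

lemma fst_comp_smul_algebraMap (c : DualNumber K) (s : Fin 2 → K) :
    TrivSqZeroExt.fst ∘ (c • (algebraMap K (DualNumber K) ∘ s)) = c.fst • s := by
  funext i
  simp [TrivSqZeroExt.algebraMap_eq_inl]

namespace IsGoodModel

lemma id : IsGoodModel (K := K) (X : Fin 2 → MvPolynomial (Fin 2) O) 1 id where
  isHomogeneous i := isHomogeneous_X O i
  hasUnitCoord hp := by rwa [formMap_X]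
  isCoord hw := by rwa [formMap_X]

lemma comp (hΦ : IsGoodModel Φ e f) (hΨ : IsGoodModel Ψ e' g) :
    IsGoodModel (formMap Φ Ψ) (e' * e) (f ∘ g) where
  isHomogeneous i := (hΦ.isHomogeneous i).aeval Ψ hΨ.isHomogeneous
  hasUnitCoord hp := by
    rw [formMap_formMap]
    exact hΦ.hasUnitCoord (hΨ.hasUnitCoord hp)
  isCoord hw := by
    rw [formMap_formMap]
    exact hΦ.isCoord (hΨ.isCoord hw)

lemma exists_iterate (hΦ : IsGoodModel Φ e f) (n : ℕ) :
    ∃ (Ψ : Fin 2 → MvPolynomial (Fin 2) O) (e' : ℕ), IsGoodModel Ψ e' f^[n] := by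
  induction n with
  | zero => exact ⟨X, 1, .id⟩
  | succ n ih =>
    obtain ⟨Ψ, e', hΨ⟩ := ih
    exact ⟨_, _, hΨ.comp hΦ⟩

end IsGoodModel

namespace IsRamifiedAt

lemma formMap_left (hΦ : ∀ i, (Φ i).IsHomogeneous e) (h : IsRamifiedAt Ψ P) :
    IsRamifiedAt (formMap Φ Ψ) P := by
  intro u hu
  obtain ⟨c, s, hs⟩ := h u hu
  refine ⟨c ^ e, formMap Φ s, ?_⟩
  rw [formMap_formMap, hs, formMap_smul hΦ]
  exact congrArg (c ^ e • ·) (formMap_map Φ (IsScalarTower.toAlgHom O K (DualNumber K)) s)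

lemma formMap_right (hΨ : IsGoodModel Ψ e g) (h : IsRamifiedAt Φ (g P)) :
    IsRamifiedAt (formMap Φ Ψ) P := by
  intro u hu
  rw [formMap_formMap]
  exact h _ (fst_comp_formMap Ψ u ▸ hΨ.isCoord hu)

lemma exists_iterate (hΦ : IsGoodModel Φ e f) {k n : ℕ} (hk : k < n)
    (h : IsRamifiedAt Φ (f^[k] P)) :
    ∃ (Ψ : Fin 2 → MvPolynomial (Fin 2) O) (e' : ℕ),
      IsGoodModel Ψ e' f^[n] ∧ IsRamifiedAt Ψ P := by
  obtain ⟨m, rfl⟩ : ∃ m, n = m + (1 + k) := ⟨n - (1 + k), by omega⟩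
  obtain ⟨Φm, em, hm⟩ := hΦ.exists_iterate m
  obtain ⟨Φk, ek, hk⟩ := hΦ.exists_iterate k
  rw [Function.iterate_add, Function.iterate_add, Function.iterate_one]
  exact ⟨_, _, hm.comp (hΦ.comp hk), (h.formMap_right hk).formMap_left hm.isHomogeneous⟩

lemma wedge_formMap_eq_zero (hΦ : IsGoodModel Φ e f) (h : IsRamifiedAt Φ P) {r : Fin 2 → K}
    (hr : IsCoord r (f P)) {u : Fin 2 → DualNumber K} (hu : IsCoord (TrivSqZeroExt.fst ∘ u) P) :
    wedge (algebraMap K (DualNumber K) ∘ r) (formMap Φ u) = 0 := by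
  obtain ⟨c, s, hs⟩ := h u hu
  have hs' : IsCoord s (f P) := by
    have := hΦ.isCoord hu
    rw [← fst_comp_formMap, hs, fst_comp_smul_algebraMap] at this
    exact this.of_smul
  rw [hs, wedge_smul_right, wedge_map, (hr.wedge_eq_zero_iff hs').2 rfl, map_zero, mul_zero]

end IsRamifiedAt

/-- The polynomial in `t` that vanishes where the image under `Φ` of the point `p + t p'` of the
line through `p` and `p'` is represented by `r`. -/
noncomputable def contactPoly (Φ : Fin 2 → MvPolynomial (Fin 2) O) (p p' r : Fin 2 → O) :
    Polynomial O :=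
  wedge (Polynomial.C ∘ r)
    (formMap Φ (Polynomial.C ∘ p + (Polynomial.X : Polynomial O) • (Polynomial.C ∘ p')))

lemma aeval_contactPoly {A : Type*} [CommRing A] [Algebra O A] (p p' r : Fin 2 → O) (x : A) :
    Polynomial.aeval x (contactPoly Φ p p' r) = wedge (algebraMap O A ∘ r)
      (formMap Φ (algebraMap O A ∘ p + x • (algebraMap O A ∘ p'))) := by
  have hC : ∀ q : Fin 2 → O,
      (Polynomial.aeval x : Polynomial O →ₐ[O] A) ∘ (Polynomial.C ∘ q) = algebraMap O A ∘ q :=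
    fun q => funext fun i => Polynomial.aeval_C x (q i)
  have hline : (Polynomial.aeval x : Polynomial O →ₐ[O] A) ∘
      (Polynomial.C ∘ p + (Polynomial.X : Polynomial O) • (Polynomial.C ∘ p')) =
        algebraMap O A ∘ p + x • (algebraMap O A ∘ p') := by
    funext i
    simp [mul_comm x]
  rw [← hline, formMap_map, ← hC]
  exact (wedge_map (Polynomial.aeval x : Polynomial O →ₐ[O] A).toRingHom _ _).symm

lemma eval_contactPoly (p p' r : Fin 2 → O) (t : O) :
    (contactPoly Φ p p' r).eval t = wedge r (formMap Φ (p + t • p')) :=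
  aeval_contactPoly p p' r t

variable [IsFractionRing O K]

lemma isRoot_contactPoly (hΦ : IsGoodModel Φ e f) {p p' r : Fin 2 → O} {t : O}
    (hQ : IsCoord (algebraMap O K ∘ (p + t • p')) Q) (hr : IsCoord (algebraMap O K ∘ r) (f Q)) :
    (contactPoly Φ p p' r).IsRoot t := by
  have hfQ : IsCoord (algebraMap O K ∘ formMap Φ (p + t • p')) (f Q) :=
    formMap_map Φ (Algebra.ofId O K) _ ▸ hΦ.isCoord hQ
  rw [Polynomial.IsRoot, eval_contactPoly, hr.algebraMap_wedge_eq_zero_iff hfQ]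

-- At a ramified point the contact polynomial vanishes on the tangent vector `t + ε`.
lemma isRoot_of_contactPoly_eq_mul (hΦ : IsGoodModel Φ e f) (h : IsRamifiedAt Φ Q)
    {p p' r : Fin 2 → O} {t : O} (hQ : IsCoord (algebraMap O K ∘ (p + t • p')) Q)
    (hr : IsCoord (algebraMap O K ∘ r) (f Q)) {M : Polynomial O}
    (hM : contactPoly Φ p p' r = (Polynomial.X - Polynomial.C t) * M) : M.IsRoot t := by
  let x : DualNumber K := algebraMap O (DualNumber K) t + DualNumber.eps
  have hfst : ∀ g : Polynomial O, (Polynomial.aeval x g).fst = algebraMap O K (g.eval t) :=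
    DFunLike.congr_fun (f := (TrivSqZeroExt.fstHom O K K).comp (Polynomial.aeval x))
      (g := (Algebra.ofId O K).comp (Polynomial.aeval t)) <| by
        ext
        simp [x, TrivSqZeroExt.algebraMap_eq_inl']
  let u : Fin 2 → DualNumber K :=
    algebraMap O (DualNumber K) ∘ p + x • (algebraMap O (DualNumber K) ∘ p')
  have hu : TrivSqZeroExt.fst ∘ u = algebraMap O K ∘ (p + t • p') := by
    funext i
    simp [u, x, TrivSqZeroExt.algebraMap_eq_inl']
  have hzero : Polynomial.aeval x (contactPoly Φ p p' r) = 0 :=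
    (aeval_contactPoly p p' r x).trans (h.wedge_formMap_eq_zero hΦ hr (hu ▸ hQ))
  have hε : DualNumber.eps * Polynomial.aeval x M = 0 := by
    rw [← hzero, hM]
    simp [x]
  have hsnd : (Polynomial.aeval x M).fst = 0 := by
    simpa using congrArg TrivSqZeroExt.snd hε
  exact (map_eq_zero_iff _ (IsFractionRing.injective O K)).1 ((hfst M).symm.trans hsnd)

lemma mul_dvd_contactPoly [IsDomain O] (hΦ : IsGoodModel Φ e f) {p p' r : Fin 2 → O} {b c : O}
    (hpp' : wedge p p' = 1) (hb : IsCoord (algebraMap O K ∘ (p + b • p')) Q)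
    (hc : IsCoord (algebraMap O K ∘ (p + c • p')) R) (hr : IsCoord (algebraMap O K ∘ r) R)
    (hfR : f R = R) (hfQ : f Q = R) (h : Q = R → IsRamifiedAt Φ R) :
    (Polynomial.X - Polynomial.C c) * (Polynomial.X - Polynomial.C b) ∣ contactPoly Φ p p' r := by
  have hbc : c - b = 0 ↔ Q = R := by
    rw [← hb.algebraMap_wedge_eq_zero_iff hc, wedge_add_smul_add_smul, hpp', mul_one]
  obtain ⟨M, hM⟩ := Polynomial.dvd_iff_isRoot.2 (isRoot_contactPoly hΦ hc (hfR.symm ▸ hr))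
  have hMb : M.IsRoot b := by
    by_cases hQR : Q = R
    · obtain rfl : c = b := sub_eq_zero.1 (hbc.2 hQR)
      exact isRoot_of_contactPoly_eq_mul hΦ (h hQR) hc (hfR.symm ▸ hr) hM
    · have hL := isRoot_contactPoly hΦ hb (hfQ.symm ▸ hr)
      rw [hM, Polynomial.root_mul, Polynomial.root_X_sub_C] at hL
      exact hL.resolve_left fun hcb => hQR (hbc.1 (sub_eq_zero.2 hcb))
  rw [hM]
  exact mul_dvd_mul_left _ (Polynomial.dvd_iff_isRoot.2 hMb)

variable [IsDomain O] [ValuationRing O]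

-- If `Q` reduced to the same point as `P`, so would `R`. In the chart at `P` in which `Q` and `R`
-- have coordinates `b` and `c`, the contact polynomial of `R` would be divisible by
-- `(t - c)(t - b)`, while its value at `0` is a unit multiple of `c`; so `b` would be a unit.
theorem IsGoodModel.distinctMod (hΦ : IsGoodModel Φ e f) (hP : f P = P) (hR : f R = R)
    (hQ : f Q = R) (hPR : P ≠ R) (h : Q = R → IsRamifiedAt Φ R) : DistinctMod O P Q := by
  obtain ⟨p, hp, hpP⟩ := exists_hasUnitCoord_isCoord (O := O) P
  obtain ⟨q, hq, hqQ⟩ := exists_hasUnitCoord_isCoord (O := O) Q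
  obtain ⟨r, hr, hrR⟩ := exists_hasUnitCoord_isCoord (O := O) R
  by_contra hdist
  have hpq : ¬ IsUnit (wedge p q) := fun hu => hdist ⟨p, q, hpP, hqQ, hu⟩
  have image : ∀ {x y : Fin 2 → O} {X Y : Projectivization K (Fin 2 → K)}, HasUnitCoord x →
      HasUnitCoord y → IsCoord (algebraMap O K ∘ x) X → IsCoord (algebraMap O K ∘ y) Y →
      f X = Y → ∃ u : Oˣ, formMap Φ x = (u : O) • y := fun hx hy hX hY hXY =>
    hy.exists_eq_units_smul (hΦ.hasUnitCoord hx) <| (hY.algebraMap_wedge_eq_zero_iff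
      (formMap_map Φ (Algebra.ofId O K) _ ▸ hΦ.isCoord hX)).2 hXY.symm
  obtain ⟨u, hu⟩ := image hp hp hpP hpP hP
  obtain ⟨u', hu'⟩ := image hq hr hqQ hrR hQ
  have hpr : ¬ IsUnit (wedge p r) := by
    have := not_isUnit_wedge_formMap hΦ.isHomogeneous hp hpq
    simpa [hu, hu', wedge_smul_left, wedge_smul_right] using this
  obtain ⟨p', hp'⟩ := hp.exists_wedge_eq_one
  obtain ⟨β, b, hb, rfl⟩ := hq.exists_eq_units_smul_add_smul hp' hpq
  obtain ⟨γ, c, -, rfl⟩ := hr.exists_eq_units_smul_add_smul hp' hpr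
  have hcR := (map_comp_smul (algebraMap O K) _ _ ▸ hrR).of_smul
  obtain ⟨M, hM⟩ := mul_dvd_contactPoly hΦ hp' (map_comp_smul (algebraMap O K) _ _ ▸ hqQ).of_smul
    hcR hrR hR hQ h
  have hc : c ≠ 0 := by
    rintro rfl
    exact hPR ((hpP.algebraMap_wedge_eq_zero_iff hcR).1 (by simp [wedge_self]))
  have hval : c * (b * M.eval 0) = c * -(u * γ) := by
    have h0 := eval_contactPoly (Φ := Φ) p p' ((γ : O) • (p + c • p')) 0
    have hwedge : wedge (p + c • p') p = -c := by
      simpa [hp'] using wedge_add_smul_add_smul p p' c 0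
    rw [hM, zero_smul, add_zero, hu, wedge_smul_left, wedge_smul_right, hwedge] at h0
    simp only [Polynomial.eval_mul, Polynomial.eval_sub, Polynomial.eval_X, Polynomial.eval_C] at h0
    linear_combination h0
  refine hb (isUnit_of_mul_isUnit_left (y := M.eval 0) ?_)
  rw [mul_left_cancel₀ hc hval]
  exact (u * γ).isUnit.neg

theorem IsGoodModel.distinctMod_of_iterate (hΦ : IsGoodModel Φ e f) {n : ℕ} (hP : f^[n] P = P)
    (hR : f^[n] R = R) (hQ : f^[n] Q = R) (hPR : P ≠ R)
    (h : Q = R → ∃ k < n, IsRamifiedAt Φ (f^[k] R)) : DistinctMod O P Q := by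
  by_cases hQR : Q = R
  · obtain ⟨k, hk, hram⟩ := h hQR
    obtain ⟨Ψ, e', hΨ, hΨram⟩ := hram.exists_iterate hΦ hk
    exact hΨ.distinctMod hP hR hQ hPR fun _ => hΨram
  · obtain ⟨Ψ, e', hΨ⟩ := hΦ.exists_iterate n
    exact hΨ.distinctMod hP hR hQ hPR fun hQR' => absurd hQR' hQR

end GoodModels

section FormsOfP1Map

variable {K : Type*} [Field K] {d : ℕ} (φ : P1Map K d)

/-- The pair of forms defining `φ`. -/
noncomputable def P1Map.forms : Fin 2 → MvPolynomial (Fin 2) K :=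
  ![φ.F, φ.G]

lemma P1Map.isHomogeneous_forms (i : Fin 2) : (φ.forms i).IsHomogeneous d := by
  fin_cases i
  exacts [φ.homF, φ.homG]

lemma P1Map.formMap_forms_ne_zero {w : Fin 2 → K} (hw : w ≠ 0) : formMap φ.forms w ≠ 0 := by
  intro h
  let ι := algebraMap K (AlgebraicClosure K)
  have hvec : ![ι (w 0), ι (w 1)] = ι ∘ w := by
    funext i
    fin_cases i <;> rfl
  have hzero : ∀ i, aeval ![ι (w 0), ι (w 1)] (φ.forms i) = 0 := fun i => by
    rw [hvec, aeval_algebraMap_apply]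
    exact (congrArg ι (congrFun h i)).trans (map_zero ι)
  obtain ⟨h0, h1⟩ := φ.coprime _ _ (hzero 0) (hzero 1)
  refine hw (funext fun i => ?_)
  fin_cases i
  exacts [(map_eq_zero ι).1 h0, (map_eq_zero ι).1 h1]

lemma IsCoord.formMap_forms {w : Fin 2 → K} {P : P1 K} (h : IsCoord w P) :
    IsCoord (formMap φ.forms w) (φ.toFun P) := by
  obtain ⟨hw, rfl⟩ := h
  obtain ⟨x, y, rfl⟩ : ∃ x y, w = ![x, y] := ⟨w 0, w 1, funext fun i => by fin_cases i <;> rfl⟩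
  have hform : formMap φ.forms ![x, y] = ![eval ![x, y] φ.F, eval ![x, y] φ.G] := by
    funext i
    fin_cases i <;> rfl
  have hne := φ.formMap_forms_ne_zero hw
  refine ⟨hne, ?_⟩
  simp only [hform] at hne ⊢
  exact φ.compat x y hw hne

variable {φ}

lemma IsCriticalPt.isRamifiedAt {P : P1 K} (h : IsCriticalPt φ P) : IsRamifiedAt φ.forms P := by
  intro u hu
  obtain ⟨a, b, hab, hP, q, hq⟩ := h
  have hP : IsCoord ![a, b] P := ⟨hab, hP⟩
  let ι := algebraMap K (DualNumber K)
  have hfst : (ι b * u 0 - ι a * u 1).fst = 0 := by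
    have := (hP.wedge_eq_zero_iff hu).2 rfl
    simp only [wedge, Matrix.cons_val_zero, Matrix.cons_val_one, Function.comp_apply] at this
    simp only [ι, TrivSqZeroExt.algebraMap_eq_inl, TrivSqZeroExt.fst_sub, TrivSqZeroExt.fst_mul,
      TrivSqZeroExt.fst_inl]
    linear_combination -this
  have hsq : (ι b * u 0 - ι a * u 1) ^ 2 = 0 := by
    ext <;> simp [pow_two, hfst]
  have hcross : ι (eval ![a, b] φ.G) * aeval u φ.F - ι (eval ![a, b] φ.F) * aeval u φ.G = 0 := by
    have := congrArg (aeval u) hq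
    simp only [map_sub, map_mul, map_pow, aeval_C, aeval_X] at this
    exact this.trans ((congrArg (· * aeval u q) hsq).trans (zero_mul _))
  refine ((hP.formMap_forms φ).hasUnitCoord.map ι).exists_eq_smul ?_ |>.imp fun c hc => ⟨_, hc⟩
  exact (neg_sub _ _).symm.trans (neg_eq_zero.2 hcross)

end FormsOfP1Map

section ChangeOfModel

variable {O : Type*} [CommRing O] {K : Type*} [Field K] [Algebra O K]
  {Φ : Fin 2 → MvPolynomial (Fin 2) O} {Ψ : Fin 2 → MvPolynomial (Fin 2) K} {c : K}

lemma formMap_of_map_eq (h : ∀ i, MvPolynomial.map (algebraMap O K) (Φ i) = C c * Ψ i)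
    {A : Type*} [CommRing A] [Algebra O A] [Algebra K A] [IsScalarTower O K A] (w : Fin 2 → A) :
    formMap Φ w = algebraMap K A c • formMap Ψ w := by
  funext i
  simp only [formMap, Pi.smul_apply, smul_eq_mul]
  rw [← aeval_map_algebraMap K w (Φ i), h, map_mul, aeval_C]

lemma IsRamifiedAt.of_map_eq (h : ∀ i, MvPolynomial.map (algebraMap O K) (Φ i) = C c * Ψ i)
    {P : Projectivization K (Fin 2 → K)} (hΨ : IsRamifiedAt Ψ P) : IsRamifiedAt Φ P := by
  intro u hu
  obtain ⟨e, s, hs⟩ := hΨ u hu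
  exact ⟨algebraMap K _ c * e, s, by rw [formMap_of_map_eq h, hs, smul_smul]⟩

end ChangeOfModel

section PlacesOfGoodReduction

variable {K : Type*} [Field K] [NumberField K] {d : ℕ} {φ : P1Map K d}
  {v : HeightOneSpectrum (𝓞 K)}

lemma GoodReductionAt.exists_isGoodModel (hφ : GoodReductionAt φ v) :
    ∃ Φ : Fin 2 → MvPolynomial (Fin 2) (v.valuation K).valuationSubring,
      IsGoodModel Φ d φ.toFun ∧ ∀ P, IsCriticalPt φ P → IsRamifiedAt Φ P := by
  obtain ⟨c, hc, F₀, G₀, hF, hG, -, hres⟩ := hφ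
  have hmap : ∀ i, MvPolynomial.map (algebraMap (v.valuation K).valuationSubring K)
      (![F₀, G₀] i) = C c * φ.forms i := fun i => by
    fin_cases i
    exacts [hF, hG]
  refine ⟨![F₀, G₀], ⟨fun i => ?_, fun hp => ?_, fun hw => ?_⟩,
    fun P hP => hP.isRamifiedAt.of_map_eq hmap⟩
  · exact .of_map (IsFractionRing.injective _ K) (hmap i ▸ (φ.isHomogeneous_forms i).C_mul c)
  · let k := IsLocalRing.ResidueField (v.valuation K).valuationSubring
    refine hasUnitCoord_formMap_of_isLocalHom
      ((algebraMap k (AlgebraicClosure k)).comp (IsLocalRing.residue _)) (fun w hw => ?_) hp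
    have hvec : ![w 0, w 1] = w := by
      funext i
      fin_cases i <;> rfl
    obtain ⟨h0, h1⟩ := hres (w 0) (w 1) (hvec ▸ hw 0) (hvec ▸ hw 1)
    funext i
    fin_cases i
    exacts [h0, h1]
  · rw [formMap_of_map_eq hmap]
    exact (hw.formMap_forms φ).smul hc

theorem GoodReductionAt.distinctMod (hφ : GoodReductionAt φ v) {P Q R : P1 K} {n : ℕ}
    (hP : φ.toFun^[n] P = P) (hR : φ.toFun^[n] R = R) (hQ : φ.toFun^[n] Q = R) (hPR : P ≠ R)
    (h : Q = R → ∃ k < n, IsCriticalPt φ (φ.toFun^[k] R)) :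
    DistinctMod (v.valuation K).valuationSubring P Q := by
  obtain ⟨Φ, hΦ, hcrit⟩ := hφ.exists_isGoodModel
  exact hΦ.distinctMod_of_iterate hP hR hQ hPR fun hQR =>
    (h hQR).imp fun k hk => ⟨hk.1, hcrit _ hk.2⟩

end PlacesOfGoodReduction

/-! ### Cross-ratios -/

section Valuations

variable {K : Type*} [Field K] {Γ : Type*} [LinearOrderedCommGroupWithZero Γ] {ν : Valuation K Γ}

lemma HasUnitCoord.of_isUnit_wedge {A : Type*} [CommRing A] [IsLocalRing A] {p q : Fin 2 → A}
    (h : IsUnit (wedge p q)) : HasUnitCoord p := by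
  by_contra hp
  simp only [HasUnitCoord, not_exists] at hp
  exact (IsLocalRing.maximalIdeal A).sub_mem (Ideal.mul_mem_right _ _ (hp 0))
    (Ideal.mul_mem_right _ _ (hp 1)) h

lemma HasUnitCoord.max_valuation_eq_one {p : Fin 2 → ν.valuationSubring} (hp : HasUnitCoord p) :
    max (ν (p 0)) (ν (p 1)) = 1 := by
  refine le_antisymm (max_le (p 0).2 (p 1).2) ?_
  obtain ⟨i, hi⟩ := hp
  rw [← (Valuation.valuationSubring.integers ν).isUnit_iff_valuation_eq_one.1 hi]
  fin_cases i
  exacts [le_max_left _ _, le_max_right _ _]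

lemma IsCoord.exists_valuation_eq {w : Fin 2 → K} {P : P1 K} (hw : IsCoord w P)
    {p : Fin 2 → ν.valuationSubring} (hp : HasUnitCoord p)
    (hpP : IsCoord (algebraMap ν.valuationSubring K ∘ p) P) :
    ∃ c : K, w = c • (algebraMap ν.valuationSubring K ∘ p) ∧
      max (ν (w 0)) (ν (w 1)) = ν c := by
  obtain ⟨c, -, rfl⟩ := hpP.exists_eq_smul hw
  refine ⟨c, rfl, ?_⟩
  simp only [Pi.smul_apply, smul_eq_mul, map_mul, ← mul_max, Function.comp_apply]
  exact (congrArg (ν c * ·) hp.max_valuation_eq_one).trans (mul_one _)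

lemma DistinctMod.valuation_wedge {P Q : P1 K} (h : DistinctMod ν.valuationSubring P Q)
    {w w' : Fin 2 → K} (hw : IsCoord w P) (hw' : IsCoord w' Q) :
    ν (wedge w w') = max (ν (w 0)) (ν (w 1)) * max (ν (w' 0)) (ν (w' 1)) := by
  obtain ⟨p, q, hp, hq, hpq⟩ := h
  obtain ⟨a, rfl, ha⟩ := hw.exists_valuation_eq (.of_isUnit_wedge hpq) hp
  obtain ⟨b, rfl, hb⟩ := hw'.exists_valuation_eq
    (.of_isUnit_wedge (q := p) (wedge_comm q p ▸ hpq.neg)) hq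
  rw [ha, hb, wedge_smul_left, wedge_smul_right, wedge_map, map_mul, map_mul,
    (Valuation.valuationSubring.integers ν).isUnit_iff_valuation_eq_one.1 hpq, mul_one]

end Valuations

section CrossRatio

variable {K : Type*} [Field K] {A B C Q Q' : P1 K}

/-- The cross-ratio of `A`, `B`, `C`, `Q`: the coordinate of `Q` for which `A`, `B`, `C` are `0`,
`1`, `∞`. It has the junk value `0` at `Q = C`. -/
noncomputable def crossRatio (A B C Q : P1 K) : K :=
  wedge B.rep C.rep * wedge A.rep Q.rep / (wedge B.rep A.rep * wedge C.rep Q.rep)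

lemma wedge_rep_ne_zero (h : A ≠ B) : wedge A.rep B.rep ≠ 0 :=
  ((isCoord_rep A).wedge_eq_zero_iff (isCoord_rep B)).not.2 h

lemma crossRatio_ne_zero (hAB : A ≠ B) (hBC : B ≠ C) (hA : A ≠ Q) (hC : C ≠ Q) :
    crossRatio A B C Q ≠ 0 :=
  div_ne_zero (mul_ne_zero (wedge_rep_ne_zero hBC) (wedge_rep_ne_zero hA))
    (mul_ne_zero (wedge_rep_ne_zero hAB.symm) (wedge_rep_ne_zero hC))

lemma one_sub_crossRatio (hAB : A ≠ B) (hC : C ≠ Q) :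
    1 - crossRatio A B C Q = crossRatio B A C Q := by
  have h := mul_ne_zero (wedge_rep_ne_zero hAB.symm) (wedge_rep_ne_zero hC)
  rw [crossRatio, crossRatio, wedge_comm A.rep B.rep, neg_mul, div_neg, ← neg_div, one_sub_div h]
  simp only [wedge]
  ring

lemma eq_of_crossRatio_eq (hAB : A ≠ B) (hBC : B ≠ C) (hAC : A ≠ C) (hQ : C ≠ Q) (hQ' : C ≠ Q')
    (h : crossRatio A B C Q = crossRatio A B C Q') : Q = Q' := by
  have hBA := wedge_rep_ne_zero hAB.symm
  rw [crossRatio, crossRatio, div_eq_div_iff (mul_ne_zero hBA (wedge_rep_ne_zero hQ))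
    (mul_ne_zero hBA (wedge_rep_ne_zero hQ'))] at h
  have hzero : wedge B.rep C.rep * wedge B.rep A.rep * wedge A.rep C.rep *
      wedge Q.rep Q'.rep = 0 := by
    simp only [wedge] at h ⊢
    linear_combination h
  exact ((isCoord_rep Q).wedge_eq_zero_iff (isCoord_rep Q')).1 <| (mul_eq_zero.1 hzero).resolve_left
    (mul_ne_zero (mul_ne_zero (wedge_rep_ne_zero hBC) hBA) (wedge_rep_ne_zero hAC))

lemma DistinctMod.valuation_crossRatio {Γ : Type*} [LinearOrderedCommGroupWithZero Γ]
    {ν : Valuation K Γ} (hA : DistinctMod ν.valuationSubring A Q)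
    (hC : DistinctMod ν.valuationSubring C Q) :
    ν (crossRatio A B C Q) = ν (wedge B.rep C.rep) * max (ν (A.rep 0)) (ν (A.rep 1)) /
      (ν (wedge B.rep A.rep) * max (ν (C.rep 0)) (ν (C.rep 1))) := by
  have hQ : max (ν (Q.rep 0)) (ν (Q.rep 1)) ≠ 0 := by
    obtain ⟨i, hi⟩ := (isCoord_rep Q).hasUnitCoord
    have : 0 < ν (Q.rep i) := ν.pos_iff.2 hi.ne_zero
    fin_cases i
    exacts [(lt_max_of_lt_left this).ne', (lt_max_of_lt_right this).ne']
  rw [crossRatio, map_div₀, map_mul, map_mul, hA.valuation_wedge (isCoord_rep A) (isCoord_rep Q),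
    hC.valuation_wedge (isCoord_rep C) (isCoord_rep Q), ← mul_assoc, ← mul_assoc,
    mul_div_mul_right _ _ hQ]

end CrossRatio

section Counting

variable {K : Type*} [Field K] [NumberField K] (T : Finset (HeightOneSpectrum (𝓞 K)))

theorem card_le_of_forall_distinctMod {P : Fin 3 → P1 K} (hP : Function.Injective P)
    {X : Finset (P1 K)} (hX : ∀ Q ∈ X, ∀ i, P i ≠ Q)
    (hX' : ∀ v ∉ T, ∀ Q ∈ X, ∀ i, DistinctMod (v.valuation K).valuationSubring (P i) Q) :
    X.card ≤ 3 * 7 ^ (4 * sCard K T) := by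
  have h01 : P 0 ≠ P 1 := hP.ne (by decide)
  have h12 : P 1 ≠ P 2 := hP.ne (by decide)
  have h02 : P 0 ≠ P 2 := hP.ne (by decide)
  have hone : ∀ Q ∈ X, 1 - crossRatio (P 0) (P 1) (P 2) Q = crossRatio (P 1) (P 0) (P 2) Q :=
    fun Q hQ => one_sub_crossRatio h01 (hX Q hQ 2)
  have hinj : Set.InjOn (crossRatio (P 0) (P 1) (P 2)) X := fun Q hQ Q' hQ' =>
    eq_of_crossRatio_eq h01 h12 h02 (hX Q hQ 2) (hX Q' hQ' 2)
  rw [← Finset.card_image_of_injOn hinj]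
  refine card_le_of_forall_valuation_eq T ?_ ?_ (fun v hv => ?_) fun v hv => ?_ <;>
    simp only [Finset.forall_mem_image]
  · exact fun Q hQ => crossRatio_ne_zero h01 h12 (hX Q hQ 0) (hX Q hQ 2)
  · exact fun Q hQ => hone Q hQ ▸ crossRatio_ne_zero h01.symm h02 (hX Q hQ 1) (hX Q hQ 2)
  · intro Q hQ Q' hQ'
    rw [(hX' v hv Q hQ 0).valuation_crossRatio (hX' v hv Q hQ 2),
      (hX' v hv Q' hQ' 0).valuation_crossRatio (hX' v hv Q' hQ' 2)]
  · intro Q hQ Q' hQ'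
    rw [hone Q hQ, hone Q' hQ', (hX' v hv Q hQ 1).valuation_crossRatio (hX' v hv Q hQ 2),
      (hX' v hv Q' hQ' 1).valuation_crossRatio (hX' v hv Q' hQ' 2)]

end Counting

/-! ### Tail points and critical cycles -/

section Dynamics

variable {K : Type*} [Field K] {d : ℕ} {φ : P1Map K d} {Q : P1 K}

lemma iterate_iterate_eq_of_dvd_of_le {α : Type*} {f : α → α} {x : α} {c m M : ℕ}
    (h : Function.IsPeriodicPt f c (f^[m] x)) (hc : c ∣ M) (hm : m ≤ M) :
    f^[M] (f^[M] x) = f^[M] x := by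
  have hx : f^[M] x = f^[M - m] (f^[m] x) := by
    rw [← Function.iterate_add_apply, Nat.sub_add_cancel hm]
  rw [hx]
  exact (h.trans_dvd hc).apply_iterate (M - m)

lemma IsTailPoint.exists_iterate (hQ : IsTailPoint φ Q) {n : ℕ} (hn : 0 < n) :
    ∃ M, n ∣ M ∧ φ.toFun^[M] (φ.toFun^[M] Q) = φ.toFun^[M] Q ∧ φ.toFun^[M] Q ≠ Q := by
  obtain ⟨⟨m, c, hc, hm⟩, hnot⟩ := hQ
  refine ⟨n * c * (m + 1), ⟨c * (m + 1), mul_assoc _ _ _⟩, ?_, fun h => hnot ⟨_, by positivity, h⟩⟩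
  exact iterate_iterate_eq_of_dvd_of_le hm ⟨n * (m + 1), by ring⟩
    (m.le_succ.trans (Nat.le_mul_of_pos_left _ (Nat.mul_pos hn hc)))

lemma InCriticalCycle.exists_iterate (hQ : InCriticalCycle φ Q) {n : ℕ} (hn : 0 < n) :
    ∃ M, n ∣ M ∧ φ.toFun^[M] Q = Q ∧ ∃ k < M, IsCriticalPt φ (φ.toFun^[k] Q) := by
  obtain ⟨C, hC, ⟨c, hc, hper⟩, l, rfl⟩ := hQ
  have hper : Function.IsPeriodicPt φ.toFun c C := hper
  have hcl : c * l < n * (c * (l + 1)) :=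
    (Nat.mul_lt_mul_of_pos_left l.lt_succ_self hc).trans_le (Nat.le_mul_of_pos_left _ hn)
  have hback : φ.toFun^[c * l - l] (φ.toFun^[l] C) = C := by
    rw [← Function.iterate_add_apply, Nat.sub_add_cancel (Nat.le_mul_of_pos_left _ hc)]
    exact hper.mul_const l
  refine ⟨n * (c * (l + 1)), dvd_mul_right _ _, ?_, c * l - l, by omega, hback.symm ▸ hC⟩
  exact ((hper.mul_const (l + 1)).const_mul n).apply_iterate l

end Dynamics

section Counting

variable {K : Type*} [Field K] [NumberField K] {d : ℕ} {φ : P1Map K d}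

-- Some iterate fixes every `P i` and maps `Q` to a fixed point `R`, and `R` is at most one of the
-- `P i`.
lemma exists_forall_ne_distinctMod {ι : Type*} [Finite ι] [Nonempty ι] {P : ι → P1 K}
    (hP : Function.Injective P) (hper : ∀ i, IsPeriodicPoint φ (P i)) {Q : P1 K}
    (hQ : IsTailPoint φ Q ∨ InCriticalCycle φ Q) :
    ∃ j, ∀ i ≠ j, P i ≠ Q ∧
      ∀ v, GoodReductionAt φ v → DistinctMod (v.valuation K).valuationSubring (P i) Q := by
  have := Fintype.ofFinite ι
  choose n hn hnP using hper
  obtain ⟨M, hM, hR, hcrit⟩ : ∃ M, ∏ i, n i ∣ M ∧ φ.toFun^[M] (φ.toFun^[M] Q) = φ.toFun^[M] Q ∧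
      (Q = φ.toFun^[M] Q → ∃ k < M, IsCriticalPt φ (φ.toFun^[k] (φ.toFun^[M] Q))) := by
    have hpos : 0 < ∏ i, n i := Finset.prod_pos fun i _ => hn i
    rcases hQ with hQ | hQ
    · obtain ⟨M, hM, hR, hne⟩ := hQ.exists_iterate hpos
      exact ⟨M, hM, hR, fun h => absurd h.symm hne⟩
    · obtain ⟨M, hM, hR, hcrit⟩ := hQ.exists_iterate hpos
      exact ⟨M, hM, by rw [hR, hR], fun _ => by rwa [hR]⟩
  have hPM : ∀ i, φ.toFun^[M] (P i) = P i := fun i =>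
    (show Function.IsPeriodicPt φ.toFun (n i) (P i) from hnP i).trans_dvd
      ((Finset.dvd_prod_of_mem n (Finset.mem_univ i)).trans hM)
  obtain ⟨j, hj⟩ : ∃ j, ∀ i ≠ j, P i ≠ φ.toFun^[M] Q := by
    by_cases h : ∃ j, P j = φ.toFun^[M] Q
    · exact h.imp fun j hj i hij hi => hij (hP (hi.trans hj.symm))
    · exact ⟨Classical.arbitrary ι, fun i _ hi => h ⟨i, hi⟩⟩
  refine ⟨j, fun i hij => ⟨?_, fun v hv => hv.distinctMod (hPM i) hR rfl (hj i hij) hcrit⟩⟩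
  rintro rfl
  exact hj i hij (hPM i).symm

theorem card_le_of_forall_isTailPoint_or_inCriticalCycle {T : Finset (HeightOneSpectrum (𝓞 K))}
    (hφ : GoodReductionOutside φ T) {P : Fin 4 → P1 K} (hP : Function.Injective P)
    (hper : ∀ i, IsPeriodicPoint φ (P i)) {X : Finset (P1 K)}
    (hX : ∀ Q ∈ X, IsTailPoint φ Q ∨ InCriticalCycle φ Q) :
    X.card ≤ 12 * 7 ^ (4 * sCard K T) := by
  let Separated (j : Fin 4) (Q : P1 K) : Prop := ∀ i ≠ j, P i ≠ Q ∧
    ∀ v, GoodReductionAt φ v → DistinctMod (v.valuation K).valuationSubring (P i) Q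
  have hcover : X = Finset.univ.biUnion fun j => X.filter (Separated j) := by
    ext Q
    simpa using fun hQ => exists_forall_ne_distinctMod hP hper (hX Q hQ)
  have hpart : ∀ j, (X.filter (Separated j)).card ≤ 3 * 7 ^ (4 * sCard K T) := fun j =>
    card_le_of_forall_distinctMod T (hP.comp Fin.succAbove_right_injective)
      (fun Q hQ i => ((Finset.mem_filter.1 hQ).2 _ (Fin.succAbove_ne j i)).1)
      (fun v hv Q hQ i => ((Finset.mem_filter.1 hQ).2 _ (Fin.succAbove_ne j i)).2 v (hφ v hv))
  calc X.card ≤ ∑ j, (X.filter (Separated j)).card := by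
        conv_lhs => rw [hcover]
        exact Finset.card_biUnion_le
    _ ≤ ∑ _j : Fin 4, 3 * 7 ^ (4 * sCard K T) := Finset.sum_le_sum fun j _ => hpart j
    _ = 12 * 7 ^ (4 * sCard K T) := by
        rw [Finset.sum_const, Finset.card_univ, Fintype.card_fin, smul_eq_mul]
        ring

lemma finite_and_ncard_le_of_forall_finset {α : Type*} {A : Set α} {N : ℕ}
    (h : ∀ X : Finset α, (∀ x ∈ X, x ∈ A) → X.card ≤ N) : A.Finite ∧ A.ncard ≤ N := by
  have hfin : A.Finite := by
    by_contra hinf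
    obtain ⟨X, hX, hcard⟩ := Set.Infinite.exists_subset_card_eq hinf (N + 1)
    have := h X hX
    omega
  exact ⟨hfin, Set.ncard_eq_toFinset_card A hfin ▸ h _ fun x => hfin.mem_toFinset.1⟩

end Counting

/-- **Theorem.** If `φ` has at least four `K`-rational periodic points, then
`|Tail(φ,K)| + |Per₀(φ,K)| ≤ 12·7^{4|S|}`. -/
theorem tail_add_per0_bound_of_four_periodic
    {K : Type*} [Field K] [NumberField K]
    (T : Finset (HeightOneSpectrum (𝓞 K))) {d : ℕ} (hd : 2 ≤ d)
    (φ : P1Map K d) (hgr : GoodReductionOutside φ T)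
    (P : Fin 4 → P1 K) (hinj : Function.Injective P)
    (hper : ∀ i, IsPeriodicPoint φ (P i)) :
    {Q : P1 K | IsTailPoint φ Q}.Finite ∧
      {Q : P1 K | IsPeriodicPoint φ Q ∧ InCriticalCycle φ Q}.Finite ∧
      {Q : P1 K | IsTailPoint φ Q}.ncard +
        {Q : P1 K | IsPeriodicPoint φ Q ∧ InCriticalCycle φ Q}.ncard ≤
          12 * 7 ^ (4 * sCard K T) := by
  set Tail := {Q : P1 K | IsTailPoint φ Q}
  set Per₀ := {Q : P1 K | IsPeriodicPoint φ Q ∧ InCriticalCycle φ Q}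
  have hdisj : Disjoint Tail Per₀ := Set.disjoint_left.2 fun Q hQ hQ' => hQ.2 hQ'.1
  obtain ⟨hfin, hcard⟩ : (Tail ∪ Per₀).Finite ∧ (Tail ∪ Per₀).ncard ≤ 12 * 7 ^ (4 * sCard K T) :=
    finite_and_ncard_le_of_forall_finset fun X hX =>
      card_le_of_forall_isTailPoint_or_inCriticalCycle hgr hinj hper fun Q hQ =>
        (hX Q hQ).imp_right And.right
  have hTail : Tail.Finite := hfin.subset Set.subset_union_left
  have hPer₀ : Per₀.Finite := hfin.subset Set.subset_union_right
  exact ⟨hTail, hPer₀, (Set.ncard_union_eq hdisj hTail hPer₀).symm.trans_le hcard⟩
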